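/- arXiv:1705.08777 — 4 statements merged into one kernel-verified Lean document; each statement's English description precedes it below -/
import Mathlib

section
/- Let g ≥ 2 and let H ⊆ GSp_{2g}(ℤ_2) be a subgroup containing the kernel of the reduction map GSp_{2g}(ℤ_2) → GSp_{2g}(ℤ/2ℤ) (equivalently, H equals the full preimage of its mod-2 image). Then the closure of the commutator subgroup of H contains the kernel of the reduction map Sp_{2g}(ℤ_2) → Sp_{2g}(ℤ/4ℤ). -/
/-! Let `c` lie in the Jacobson radical, for instance `c = 2` in `ℤ_[2]`. Commutators of
`diag(1 + c, 1)`, whose multiplier `1 + c` is not `1`, with the unipotents of level `c` are all the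
unipotents of level `c ^ 2`. A symplectic matrix congruent to `1` modulo `c ^ 2` has an invertible
upper left block `A` and is the product of a lower unipotent, `diag(A, (A⁻¹)ᵀ)` and an upper
unipotent, so only `A` matters. For symmetric `X` and `Y`, the commutator of a lower and an upper
unipotent of level `c` produces `A = 1 - c ^ 2 • (X * Y)`; with `X` and `Y` chosen so that `X * Y`
has a single nonzero row, an arbitrary one, these generate the congruence subgroup of level `c ^ 2`
of `GL`. The commutator subgroup thus contains the whole kernel, before taking the closure. -/

open Matrix

/-- The standard symplectic matrix `Ω`, block-diagonal with `2×2` blocks `[[0,1],[-1,0]]`. -/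
def OmegaMat (g : ℕ) (R : Type) [CommRing R] : Matrix (Fin (2*g)) (Fin (2*g)) R :=
  Matrix.of fun i j =>
    if (i : ℕ) + 1 = (j : ℕ) ∧ (j : ℕ) % 2 = 1 then 1
    else if (j : ℕ) + 1 = (i : ℕ) ∧ (i : ℕ) % 2 = 1 then -1 else 0

/-- The symplectic group `Sp_{2g}(R)`, as a set of invertible matrices:
those `S` with `SᵀΩS = Ω`. -/
def SpSet (g : ℕ) (R : Type) [CommRing R] : Set (GL (Fin (2*g)) R) :=
  {S | (S : Matrix (Fin (2*g)) (Fin (2*g)) R)ᵀ * OmegaMat g R * S = OmegaMat g R}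

/-- The general symplectic group `GSp_{2g}(R)`, as a set of invertible matrices:
those `S` with `SᵀΩS = m·Ω` for some unit `m` (the multiplier). -/
def GSpSet (g : ℕ) (R : Type) [CommRing R] : Set (GL (Fin (2*g)) R) :=
  {S | ∃ m : Rˣ, (S : Matrix (Fin (2*g)) (Fin (2*g)) R)ᵀ * OmegaMat g R * S = (m : R) • OmegaMat g R}

/-- Entrywise mod-2 reduction `GL_{2g}(ℤ_2) → GL_{2g}(ℤ/2ℤ)`. -/
noncomputable def redMod2 (g : ℕ) : GL (Fin (2*g)) ℤ_[2] →* GL (Fin (2*g)) (ZMod 2) :=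
  Units.map ((PadicInt.toZMod).mapMatrix.toMonoidHom)

/-- Entrywise mod-4 reduction `GL_{2g}(ℤ_2) → GL_{2g}(ℤ/4ℤ)`. -/
noncomputable def redMod4 (g : ℕ) : GL (Fin (2*g)) ℤ_[2] →* GL (Fin (2*g)) (ZMod (2^2)) :=
  Units.map ((PadicInt.toZModPow 2).mapMatrix.toMonoidHom)

/-- The kernel of the reduction map `GSp_{2g}(ℤ_2) → GSp_{2g}(ℤ/2ℤ)`: the elements of
`GSp_{2g}(ℤ_2)` that reduce to the identity mod 2, as a subgroup of `GL_{2g}(ℤ_2)`. -/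
def GSpKer (g : ℕ) : Subgroup (GL (Fin (2*g)) ℤ_[2]) where
  carrier := {x | x ∈ GSpSet g ℤ_[2] ∧ redMod2 g x = 1}
  one_mem' := by
    refine ⟨⟨1, ?_⟩, MonoidHom.map_one _⟩
    simp
  mul_mem' := by
    rintro a b ⟨⟨m, hm⟩, ha1⟩ ⟨⟨m', hm'⟩, hb1⟩
    refine ⟨⟨m * m', ?_⟩, by rw [MonoidHom.map_mul, ha1, hb1, mul_one]⟩
    have hval : ((a * b : GL (Fin (2*g)) ℤ_[2]) : Matrix (Fin (2*g)) (Fin (2*g)) ℤ_[2])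
        = (a : Matrix (Fin (2*g)) (Fin (2*g)) ℤ_[2]) * (b : Matrix (Fin (2*g)) (Fin (2*g)) ℤ_[2]) :=
      Units.val_mul a b
    rw [hval, Matrix.transpose_mul]
    calc (b : Matrix (Fin (2*g)) (Fin (2*g)) ℤ_[2])ᵀ * (a : Matrix (Fin (2*g)) (Fin (2*g)) ℤ_[2])ᵀ
          * OmegaMat g ℤ_[2]
          * ((a : Matrix (Fin (2*g)) (Fin (2*g)) ℤ_[2]) * (b : Matrix (Fin (2*g)) (Fin (2*g)) ℤ_[2]))
        = (b : Matrix (Fin (2*g)) (Fin (2*g)) ℤ_[2])ᵀ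
            * (((a : Matrix (Fin (2*g)) (Fin (2*g)) ℤ_[2])ᵀ * OmegaMat g ℤ_[2]
              * (a : Matrix (Fin (2*g)) (Fin (2*g)) ℤ_[2]))
            * (b : Matrix (Fin (2*g)) (Fin (2*g)) ℤ_[2])) := by
          simp only [mul_assoc]
      _ = (b : Matrix (Fin (2*g)) (Fin (2*g)) ℤ_[2])ᵀ
            * (((m : ℤ_[2]) • OmegaMat g ℤ_[2]) * (b : Matrix (Fin (2*g)) (Fin (2*g)) ℤ_[2])) := by
          rw [hm]
      _ = (m : ℤ_[2]) • ((b : Matrix (Fin (2*g)) (Fin (2*g)) ℤ_[2])ᵀ * OmegaMat g ℤ_[2]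
            * (b : Matrix (Fin (2*g)) (Fin (2*g)) ℤ_[2])) := by
          simp only [Matrix.smul_mul, Matrix.mul_smul, mul_assoc]
      _ = (m : ℤ_[2]) • ((m' : ℤ_[2]) • OmegaMat g ℤ_[2]) := by rw [hm']
      _ = ((m * m' : ℤ_[2]ˣ) : ℤ_[2]) • OmegaMat g ℤ_[2] := by
          rw [smul_smul, Units.val_mul]
  inv_mem' := by
    rintro a ⟨⟨m, hm⟩, ha1⟩
    refine ⟨⟨m⁻¹, ?_⟩, by rw [MonoidHom.map_inv, ha1, inv_one]⟩
    set A : Matrix (Fin (2*g)) (Fin (2*g)) ℤ_[2] := (a : Matrix (Fin (2*g)) (Fin (2*g)) ℤ_[2]) with hA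
    set B : Matrix (Fin (2*g)) (Fin (2*g)) ℤ_[2] :=
      ((a⁻¹ : GL (Fin (2*g)) ℤ_[2]) : Matrix (Fin (2*g)) (Fin (2*g)) ℤ_[2]) with hB
    have hAB : A * B = 1 := a.mul_inv
    have h2 : OmegaMat g ℤ_[2] = ((m⁻¹ : ℤ_[2]ˣ) : ℤ_[2]) • (Aᵀ * OmegaMat g ℤ_[2] * A) := by
      rw [hm, smul_smul, Units.inv_mul, one_smul]
    calc Bᵀ * OmegaMat g ℤ_[2] * B
        = Bᵀ * (((m⁻¹ : ℤ_[2]ˣ) : ℤ_[2]) • (Aᵀ * OmegaMat g ℤ_[2] * A)) * B := by rw [← h2]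
      _ = ((m⁻¹ : ℤ_[2]ˣ) : ℤ_[2]) • ((Bᵀ * Aᵀ) * OmegaMat g ℤ_[2] * (A * B)) := by
          simp only [Matrix.smul_mul, Matrix.mul_smul, mul_assoc]
      _ = ((m⁻¹ : ℤ_[2]ˣ) : ℤ_[2]) • OmegaMat g ℤ_[2] := by
          rw [← Matrix.transpose_mul, hAB]
          simp

open scoped commutatorElement

section CongruenceSubgroup

variable {n R : Type*} [Fintype n] [DecidableEq n] [CommRing R]

theorem generalLinearGroup_map_eq_one_iff {S : Type*} [CommRing S] {f : R →+* S} {c : R}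
    (hf : RingHom.ker f = Ideal.span {c}) {x : GL n R} :
    GeneralLinearGroup.map f x = 1 ↔ ∃ P : Matrix n n R, (x : Matrix n n R) = 1 + c • P := by
  have hentry (i j : n) :
      f (x i j) = (1 : Matrix n n S) i j ↔ c ∣ x i j - (1 : Matrix n n R) i j := by
    rw [← Ideal.mem_span_singleton, ← hf, RingHom.sub_mem_ker_iff, one_apply, one_apply,
      apply_ite f, map_one, map_zero]
  constructor
  · intro hx
    choose P hP using fun i j ↦ (hentry i j).1 (by rw [← GeneralLinearGroup.map_apply, hx]; rfl)
    refine ⟨of P, Matrix.ext fun i j ↦ ?_⟩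
    simp [← hP i j]
  · rintro ⟨P, hP⟩
    ext i j
    exact (hentry i j).2 ⟨P i j, by simp [hP]⟩

/-- The principal congruence subgroup of level `c`: the invertible matrices over `R` that reduce
to the identity modulo the ideal `(c)`. -/
def principalCongruenceSubgroup (n : Type*) [Fintype n] [DecidableEq n] (c : R) :
    Subgroup (GL n R) :=
  (GeneralLinearGroup.map (Ideal.Quotient.mk (Ideal.span {c}))).ker

theorem mem_principalCongruenceSubgroup_iff {c : R} {x : GL n R} :
    x ∈ principalCongruenceSubgroup n c ↔ ∃ P : Matrix n n R, (x : Matrix n n R) = 1 + c • P :=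
  generalLinearGroup_map_eq_one_iff Ideal.mk_ker

theorem isUnit_one_add_smul_of_mem_jacobson {c : R} (hc : c ∈ (⊥ : Ideal R).jacobson)
    (P : Matrix n n R) : IsUnit (1 + c • P) := by
  have : IsLocalHom (Ideal.Quotient.mk (Ideal.span {c})) :=
    isLocalHom_of_le_jacobson_bot _ ((Ideal.span_singleton_le_iff_mem _).2 hc)
  have hcP : (Ideal.Quotient.mk (Ideal.span {c})).mapMatrix (c • P) = 0 := by
    ext i j
    simp [Ideal.Quotient.eq_zero_iff_mem.2 (Ideal.mem_span_singleton_self c)]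
  rw [isUnit_iff_isUnit_det]
  refine isUnit_of_map_unit (Ideal.Quotient.mk (Ideal.span {c})) _ ?_
  rw [RingHom.map_det, map_add, map_one, hcP, add_zero, det_one]
  exact isUnit_one

theorem sum_vecMulVec_single_one (P : Matrix n n R) :
    ∑ k, vecMulVec (Pi.single k 1) (P k) = P := by
  ext i j
  simp [Matrix.sum_apply, vecMulVec_apply, Pi.single_apply]

-- `1 + c P` is built up from `1` by left multiplications, each creating one row of `P`.
theorem principalCongruenceSubgroup_le_of_row_mem {c : R} (hc : c ∈ (⊥ : Ideal R).jacobson)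
    {N : Subgroup (GL n R)}
    (hN : ∀ (x : GL n R) (k : n) (v : n → R),
      (x : Matrix n n R) = 1 + c • vecMulVec (Pi.single k 1) v → x ∈ N) :
    principalCongruenceSubgroup n c ≤ N := by
  intro x hx
  obtain ⟨P, hP⟩ := mem_principalCongruenceSubgroup_iff.1 hx
  suffices h : ∀ (s : Finset n) (y : GL n R),
      (y : Matrix n n R) = 1 + c • ∑ k ∈ s, vecMulVec (Pi.single k 1) (P k) → y ∈ N from
    h Finset.univ x (by rw [sum_vecMulVec_single_one, hP])
  intro s
  induction s using Finset.induction_on with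
  | empty =>
    intro y hy
    have : y = 1 := Units.ext (by simpa using hy)
    exact this ▸ N.one_mem
  | insert k s hks ih =>
    intro y hy
    obtain ⟨z, hz⟩ := isUnit_one_add_smul_of_mem_jacobson hc
      (∑ k ∈ s, vecMulVec (Pi.single k 1) (P k))
    have hyz : (y : Matrix n n R) = z + c • vecMulVec (Pi.single k 1) (P k) := by
      rw [hy, hz, Finset.sum_insert hks, smul_add]
      abel
    refine (N.mul_mem_cancel_right (N.inv_mem (ih z hz))).1 (hN _ k (P k ᵥ* ↑z⁻¹) ?_)
    rw [Units.val_mul, hyz, add_mul, Units.mul_inv, smul_mul, vecMulVec_mul]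

end CongruenceSubgroup

section SimilitudeGroup

variable {n R : Type*} [Fintype n] [DecidableEq n] [CommRing R]

theorem transpose_mul_transpose_inv (x : GL n R) :
    (x : Matrix n n R)ᵀ * (↑x⁻¹ : Matrix n n R)ᵀ = 1 := by
  rw [← transpose_mul, Units.inv_mul, transpose_one]

theorem transpose_inv_mul_transpose (x : GL n R) :
    (↑x⁻¹ : Matrix n n R)ᵀ * (x : Matrix n n R)ᵀ = 1 := by
  rw [← transpose_mul, Units.mul_inv, transpose_one]

/-- The group of similitudes of the bilinear form with Gram matrix `B`: the invertible matrices
that preserve `B` up to a unit, the multiplier. -/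
def similitudeGroup (B : Matrix n n R) : Subgroup (GL n R) where
  carrier := {x | ∃ m : Rˣ, (x : Matrix n n R)ᵀ * B * x = (m : R) • B}
  one_mem' := ⟨1, by simp⟩
  mul_mem' := by
    rintro x y ⟨m, hm⟩ ⟨m', hm'⟩
    refine ⟨m * m', ?_⟩
    calc ((x * y : GL n R) : Matrix n n R)ᵀ * B * (x * y : GL n R)
        = (y : Matrix n n R)ᵀ * ((x : Matrix n n R)ᵀ * B * x) * y := by
          simp only [Units.val_mul, transpose_mul, mul_assoc]
      _ = ((m * m' : Rˣ) : R) • B := by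
          rw [hm, mul_smul_comm, smul_mul_assoc, hm', smul_smul, Units.val_mul]
  inv_mem' := by
    rintro x ⟨m, hm⟩
    refine ⟨m⁻¹, ?_⟩
    calc (↑x⁻¹ : Matrix n n R)ᵀ * B * (↑x⁻¹ : Matrix n n R)
        = (↑x⁻¹ : Matrix n n R)ᵀ * ((↑m⁻¹ : R) • ((x : Matrix n n R)ᵀ * B * x)) *
            (↑x⁻¹ : Matrix n n R) := by
          rw [hm, smul_smul, Units.inv_mul, one_smul]
      _ = (↑m⁻¹ : R) • ((↑x⁻¹ : Matrix n n R)ᵀ * (x : Matrix n n R)ᵀ * B *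
            (x * (↑x⁻¹ : Matrix n n R))) := by
          simp only [mul_smul_comm, smul_mul_assoc, mul_assoc]
      _ = (↑m⁻¹ : R) • B := by
          rw [transpose_inv_mul_transpose, Units.mul_inv, one_mul, mul_one]

end SimilitudeGroup

section Reindex

variable {m n R : Type*} [Fintype m] [DecidableEq m] [Fintype n] [DecidableEq n] [CommRing R]

/-- Relabelling the rows and columns of invertible matrices along a bijection `e`. -/
def generalLinearGroupReindex (R : Type*) [CommRing R] (e : m ≃ n) : GL m R ≃* GL n R :=
  Units.mapEquiv (reindexRingEquiv R e).toMulEquiv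

variable (e : m ≃ n) (x : GL m R)

theorem val_generalLinearGroupReindex :
    (generalLinearGroupReindex R e x : Matrix n n R) = reindexAlgEquiv R R e (x : Matrix m m R) :=
  rfl

theorem generalLinearGroupReindex_preserves_iff (a : R) (B : Matrix m m R) :
    (generalLinearGroupReindex R e x : Matrix n n R)ᵀ * reindexAlgEquiv R R e B *
        generalLinearGroupReindex R e x = a • reindexAlgEquiv R R e B ↔
      (x : Matrix m m R)ᵀ * B * x = a • B := by
  have htranspose : (reindexAlgEquiv R R e (x : Matrix m m R))ᵀ =
      reindexAlgEquiv R R e (x : Matrix m m R)ᵀ := rfl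
  rw [val_generalLinearGroupReindex, htranspose, ← map_mul, ← map_mul, ← map_smul,
    EmbeddingLike.apply_eq_iff_eq]

theorem generalLinearGroupReindex_mem_principalCongruenceSubgroup_iff {c : R} :
    generalLinearGroupReindex R e x ∈ principalCongruenceSubgroup n c ↔
      x ∈ principalCongruenceSubgroup m c := by
  rw [mem_principalCongruenceSubgroup_iff, mem_principalCongruenceSubgroup_iff,
    (reindexAlgEquiv R R e).surjective.exists]
  refine exists_congr fun P ↦ ?_
  rw [val_generalLinearGroupReindex, ← map_smul, ← map_one (reindexAlgEquiv R R e), ← map_add,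
    EmbeddingLike.apply_eq_iff_eq]

end Reindex

section Siegel

variable {l R : Type*} [Fintype l] [DecidableEq l] [CommRing R]

/-- The upper unipotent block matrix with off-diagonal block `X`. -/
def upperUnipotent (X : Matrix l l R) : GL (l ⊕ l) R where
  val := fromBlocks 1 X 0 1
  inv := fromBlocks 1 (-X) 0 1
  val_inv := by simp [fromBlocks_multiply]
  inv_val := by simp [fromBlocks_multiply]

/-- The lower unipotent block matrix with off-diagonal block `Y`. -/
def lowerUnipotent (Y : Matrix l l R) : GL (l ⊕ l) R where
  val := fromBlocks 1 0 Y 1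
  inv := fromBlocks 1 0 (-Y) 1
  val_inv := by simp [fromBlocks_multiply]
  inv_val := by simp [fromBlocks_multiply]

/-- The embedding `A ↦ diag(A, (A⁻¹)ᵀ)` of `GL_l` as the Levi factor of the Siegel parabolic
subgroup of the symplectic group. -/
def siegelLevi : GL l R →* GL (l ⊕ l) R where
  toFun A :=
    { val := fromBlocks A 0 0 (↑A⁻¹ : Matrix l l R)ᵀ
      inv := fromBlocks ↑A⁻¹ 0 0 (A : Matrix l l R)ᵀ
      val_inv := by simp [-coe_units_inv, fromBlocks_multiply, ← transpose_mul]
      inv_val := by simp [-coe_units_inv, fromBlocks_multiply, ← transpose_mul] }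
  map_one' := by ext1; simp
  map_mul' A B := by ext1; simp [-coe_units_inv, fromBlocks_multiply]

/-- The symplectic similitude `diag(u, 1)`, of multiplier `u`. -/
def multiplierElement (l : Type*) [Fintype l] [DecidableEq l] (u : Rˣ) : GL (l ⊕ l) R where
  val := fromBlocks ((u : R) • 1) 0 0 1
  inv := fromBlocks ((↑u⁻¹ : R) • 1) 0 0 1
  val_inv := by simp [fromBlocks_multiply, smul_smul]
  inv_val := by simp [fromBlocks_multiply, smul_smul]

theorem upperUnipotent_mem_symplecticGroup {X : Matrix l l R} (hX : X.IsSymm) :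
    upperUnipotent X ∈ (symplecticGroup l R).units := by
  rw [Submonoid.mem_units_iff]
  constructor <;>
    simp [upperUnipotent, SymplecticGroup.fromBlocks_mem_iff, hX.eq]

theorem lowerUnipotent_mem_symplecticGroup {Y : Matrix l l R} (hY : Y.IsSymm) :
    lowerUnipotent Y ∈ (symplecticGroup l R).units := by
  rw [Submonoid.mem_units_iff]
  constructor <;>
    simp [lowerUnipotent, SymplecticGroup.fromBlocks_mem_iff, hY.eq]

theorem units_symplecticGroup_le_similitudeGroup :
    (symplecticGroup l R).units ≤ similitudeGroup (J l R) := by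
  intro x hx
  refine ⟨1, ?_⟩
  rw [Units.val_one, one_smul, SymplecticGroup.mem_iff'.1 ((Submonoid.mem_units_iff _ _).1 hx).1]

theorem multiplierElement_mem_similitudeGroup (u : Rˣ) :
    multiplierElement l u ∈ similitudeGroup (J l R) :=
  ⟨u, by simp [multiplierElement, J, fromBlocks_transpose, fromBlocks_multiply, fromBlocks_smul]⟩

theorem upperUnipotent_smul_mem_principalCongruenceSubgroup (c : R) (X : Matrix l l R) :
    upperUnipotent (c • X) ∈ principalCongruenceSubgroup (l ⊕ l) c :=
  mem_principalCongruenceSubgroup_iff.2 ⟨fromBlocks 0 X 0 0, by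
    simp [upperUnipotent, ← fromBlocks_one, fromBlocks_smul, fromBlocks_add]⟩

theorem lowerUnipotent_smul_mem_principalCongruenceSubgroup (c : R) (Y : Matrix l l R) :
    lowerUnipotent (c • Y) ∈ principalCongruenceSubgroup (l ⊕ l) c :=
  mem_principalCongruenceSubgroup_iff.2 ⟨fromBlocks 0 0 Y 0, by
    simp [lowerUnipotent, ← fromBlocks_one, fromBlocks_smul, fromBlocks_add]⟩

theorem multiplierElement_mem_principalCongruenceSubgroup {c : R} {u : Rˣ}
    (hu : (u : R) = 1 + c) :
    multiplierElement l u ∈ principalCongruenceSubgroup (l ⊕ l) c :=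
  mem_principalCongruenceSubgroup_iff.2 ⟨fromBlocks 1 0 0 0, by
    simp [multiplierElement, hu, add_smul, ← fromBlocks_one, fromBlocks_smul, fromBlocks_add]⟩

theorem commutator_multiplierElement_upperUnipotent (u : Rˣ) (X : Matrix l l R) :
    ⁅multiplierElement l u, upperUnipotent X⁆ = upperUnipotent (((u : R) - 1) • X) := by
  ext1
  simp [-coe_units_inv, commutatorElement_def, multiplierElement, upperUnipotent,
    fromBlocks_multiply, smul_smul, add_smul, sub_eq_neg_add]

theorem commutator_inv_multiplierElement_lowerUnipotent (u : Rˣ) (Y : Matrix l l R) :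
    ⁅(multiplierElement l u)⁻¹, lowerUnipotent Y⁆ = lowerUnipotent (((u : R) - 1) • Y) := by
  ext1
  simp [-coe_units_inv, commutatorElement_def, multiplierElement, lowerUnipotent,
    fromBlocks_multiply, smul_smul, add_smul, sub_eq_add_neg]

theorem val_commutator_lowerUnipotent_upperUnipotent (X Y : Matrix l l R) :
    (⁅lowerUnipotent Y, upperUnipotent X⁆ : GL (l ⊕ l) R) =
      fromBlocks (1 - X * Y) (X * Y * X) (-(Y * X * Y)) (1 + Y * X + Y * X * Y * X) := by
  simp only [commutatorElement_def, Units.val_mul, lowerUnipotent, upperUnipotent, Units.inv_mk,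
    fromBlocks_multiply]
  congr 1 <;> noncomm_ring

theorem isSymm_mul_inv {A : GL l R} {C : Matrix l l R}
    (h : (A : Matrix l l R)ᵀ * C = Cᵀ * A) : (C * (↑A⁻¹ : Matrix l l R)).IsSymm := by
  calc (C * (↑A⁻¹ : Matrix l l R))ᵀ
      = (↑A⁻¹ : Matrix l l R)ᵀ * (Cᵀ * A) * (↑A⁻¹ : Matrix l l R) := by
        rw [transpose_mul, mul_assoc, mul_assoc, Units.mul_inv, mul_one]
    _ = C * (↑A⁻¹ : Matrix l l R) := by
        rw [← h, ← mul_assoc, transpose_inv_mul_transpose, one_mul]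

theorem isSymm_inv_mul {A : GL l R} {B : Matrix l l R}
    (h : (A : Matrix l l R) * Bᵀ = B * (A : Matrix l l R)ᵀ) :
    ((↑A⁻¹ : Matrix l l R) * B).IsSymm := by
  calc ((↑A⁻¹ : Matrix l l R) * B)ᵀ
      = (↑A⁻¹ : Matrix l l R) * (A * Bᵀ) * (↑A⁻¹ : Matrix l l R)ᵀ := by
        rw [transpose_mul, ← mul_assoc, Units.inv_mul, one_mul]
    _ = (↑A⁻¹ : Matrix l l R) * B := by
        rw [h, mul_assoc, mul_assoc, transpose_mul_transpose_inv, mul_one]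

theorem eq_lowerUnipotent_mul_siegelLevi_mul_upperUnipotent {x : GL (l ⊕ l) R} {A : GL l R}
    {B C D : Matrix l l R} (hx : (x : Matrix (l ⊕ l) (l ⊕ l) R) = fromBlocks A B C D)
    (hsp : (x : Matrix (l ⊕ l) (l ⊕ l) R) ∈ symplecticGroup l R) :
    x = lowerUnipotent (C * (↑A⁻¹ : Matrix l l R)) * siegelLevi A *
      upperUnipotent ((↑A⁻¹ : Matrix l l R) * B) := by
  obtain ⟨hAC, -, hAD⟩ := SymplecticGroup.fromBlocks_mem_iff.1 (hx ▸ hsp)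
  have hD : D = C * (↑A⁻¹ : Matrix l l R) * B + (↑A⁻¹ : Matrix l l R)ᵀ := by
    calc D = (↑A⁻¹ : Matrix l l R)ᵀ * ((A : Matrix l l R)ᵀ * D) := by
          rw [← mul_assoc, transpose_inv_mul_transpose, one_mul]
      _ = (C * (↑A⁻¹ : Matrix l l R))ᵀ * B + (↑A⁻¹ : Matrix l l R)ᵀ := by
          rw [sub_eq_iff_eq_add'.1 hAD, mul_add, mul_one, transpose_mul, mul_assoc]
      _ = C * (↑A⁻¹ : Matrix l l R) * B + (↑A⁻¹ : Matrix l l R)ᵀ := by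
          rw [(isSymm_mul_inv hAC).eq]
  ext1
  rw [hx, hD]
  simp [-coe_units_inv, lowerUnipotent, upperUnipotent, siegelLevi, fromBlocks_multiply,
    mul_assoc]

end Siegel

-- Dividing all entries by means of one and the same function keeps the matrix symmetric, so
-- nothing needs to be cancelled.
theorem exists_isSymm_smul_eq {n S α : Type*} [SMul S α] [Nonempty α] {c : S} {M : Matrix n n α}
    (hM : (c • M).IsSymm) : ∃ X : Matrix n n α, X.IsSymm ∧ c • X = c • M :=
  ⟨(c • M).map (Function.invFun (c • ·)), hM.map _,
    Matrix.ext fun i j ↦ Function.invFun_eq ⟨M i j, rfl⟩⟩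

section CommutatorSubgroup

variable {l R : Type*} [Fintype l] [DecidableEq l] [CommRing R]

theorem mem_iff_siegelLevi_mem {d : R} {K : Subgroup (GL (l ⊕ l) R)}
    (hU : ∀ X : Matrix l l R, X.IsSymm → upperUnipotent (d • X) ∈ K)
    (hL : ∀ Y : Matrix l l R, Y.IsSymm → lowerUnipotent (d • Y) ∈ K)
    {x : GL (l ⊕ l) R} (hsp : (x : Matrix (l ⊕ l) (l ⊕ l) R) ∈ symplecticGroup l R)
    {A : GL l R} {B C D : Matrix l l R}
    (hx : (x : Matrix (l ⊕ l) (l ⊕ l) R) = fromBlocks A (d • B) (d • C) D) :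
    x ∈ K ↔ siegelLevi A ∈ K := by
  have hrel := SymplecticGroup.fromBlocks_mem_iff.1 (hx ▸ hsp)
  have hrelT := SymplecticGroup.fromBlocks_mem_iff.1
    (fromBlocks_transpose .. ▸ SymplecticGroup.transpose_mem (hx ▸ hsp))
  have hCA := isSymm_mul_inv hrel.1
  have hAB : ((↑A⁻¹ : Matrix l l R) * d • B).IsSymm :=
    isSymm_inv_mul (by simpa only [transpose_transpose] using hrelT.1)
  rw [eq_lowerUnipotent_mul_siegelLevi_mul_upperUnipotent hx hsp]
  rw [smul_mul_assoc] at hCA ⊢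
  rw [mul_smul_comm] at hAB ⊢
  obtain ⟨X, hX, hXeq⟩ := exists_isSymm_smul_eq hAB
  obtain ⟨Y, hY, hYeq⟩ := exists_isSymm_smul_eq hCA
  rw [← hXeq, ← hYeq, K.mul_mem_cancel_right (hU X hX), K.mul_mem_cancel_left (hL Y hY)]

/-- The principal congruence subgroup of level `c` of the general symplectic group, with respect
to the form `J`. -/
def gspCongruenceSubgroup (l : Type*) [Fintype l] [DecidableEq l] (c : R) :
    Subgroup (GL (l ⊕ l) R) :=
  similitudeGroup (J l R) ⊓ principalCongruenceSubgroup (l ⊕ l) c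

theorem upperUnipotent_smul_mem_gspCongruenceSubgroup (c : R) {X : Matrix l l R}
    (hX : X.IsSymm) : upperUnipotent (c • X) ∈ gspCongruenceSubgroup l c :=
  ⟨units_symplecticGroup_le_similitudeGroup (upperUnipotent_mem_symplecticGroup (hX.smul c)),
    upperUnipotent_smul_mem_principalCongruenceSubgroup c X⟩

theorem lowerUnipotent_smul_mem_gspCongruenceSubgroup (c : R) {Y : Matrix l l R}
    (hY : Y.IsSymm) : lowerUnipotent (c • Y) ∈ gspCongruenceSubgroup l c :=
  ⟨units_symplecticGroup_le_similitudeGroup (lowerUnipotent_mem_symplecticGroup (hY.smul c)),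
    lowerUnipotent_smul_mem_principalCongruenceSubgroup c Y⟩

variable {c : R} (hc : c ∈ (⊥ : Ideal R).jacobson)
include hc

theorem exists_multiplierElement_mem_gspCongruenceSubgroup :
    ∃ u : Rˣ, (u : R) - 1 = c ∧ multiplierElement l u ∈ gspCongruenceSubgroup l c := by
  obtain ⟨u, hu⟩ : IsUnit (1 + c) := by
    simpa [add_comm] using Ideal.mem_jacobson_bot.1 hc 1
  exact ⟨u, by rw [hu, add_sub_cancel_left], multiplierElement_mem_similitudeGroup u,
    multiplierElement_mem_principalCongruenceSubgroup hu⟩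

theorem upperUnipotent_sq_smul_mem_commutator {X : Matrix l l R} (hX : X.IsSymm) :
    upperUnipotent (c ^ 2 • X) ∈ ⁅gspCongruenceSubgroup l c, gspCongruenceSubgroup l c⁆ := by
  obtain ⟨u, hu, hmem⟩ := exists_multiplierElement_mem_gspCongruenceSubgroup (l := l) hc
  rw [sq, mul_smul, ← congr($hu • c • X), ← commutator_multiplierElement_upperUnipotent]
  exact Subgroup.commutator_mem_commutator hmem
    (upperUnipotent_smul_mem_gspCongruenceSubgroup c hX)

theorem lowerUnipotent_sq_smul_mem_commutator {Y : Matrix l l R} (hY : Y.IsSymm) :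
    lowerUnipotent (c ^ 2 • Y) ∈ ⁅gspCongruenceSubgroup l c, gspCongruenceSubgroup l c⁆ := by
  obtain ⟨u, hu, hmem⟩ := exists_multiplierElement_mem_gspCongruenceSubgroup (l := l) hc
  rw [sq, mul_smul, ← congr($hu • c • Y), ← commutator_inv_multiplierElement_lowerUnipotent]
  exact Subgroup.commutator_mem_commutator (inv_mem hmem)
    (lowerUnipotent_smul_mem_gspCongruenceSubgroup c hY)

theorem siegelLevi_mem_commutator_of_mul {X Y : Matrix l l R} (hX : X.IsSymm) (hY : Y.IsSymm)
    {A : GL l R} (hA : (A : Matrix l l R) = 1 - c ^ 2 • (X * Y)) :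
    siegelLevi A ∈ ⁅gspCongruenceSubgroup l c, gspCongruenceSubgroup l c⁆ := by
  have hsp : ⁅lowerUnipotent (c • Y), upperUnipotent (c • X)⁆ ∈ (symplecticGroup l R).units :=
    have hL := lowerUnipotent_mem_symplecticGroup (hY.smul c)
    have hU := upperUnipotent_mem_symplecticGroup (hX.smul c)
    mul_mem (mul_mem (mul_mem hL hU) (inv_mem hL)) (inv_mem hU)
  have hblocks : (⁅lowerUnipotent (c • Y), upperUnipotent (c • X)⁆ : GL (l ⊕ l) R) =
      fromBlocks A (c ^ 2 • (c • (X * Y * X))) (c ^ 2 • (-c • (Y * X * Y)))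
        (1 + c ^ 2 • (Y * X) + c ^ 4 • (Y * X * Y * X)) := by
    rw [val_commutator_lowerUnipotent_upperUnipotent, hA]
    congr 1 <;> simp only [smul_mul_assoc, mul_smul_comm] <;> module
  rw [← mem_iff_siegelLevi_mem (fun _ ↦ upperUnipotent_sq_smul_mem_commutator hc)
    (fun _ ↦ lowerUnipotent_sq_smul_mem_commutator hc) ((Submonoid.mem_units_iff _ _).1 hsp).1
    hblocks]
  exact Subgroup.commutator_mem_commutator (lowerUnipotent_smul_mem_gspCongruenceSubgroup c hY)
    (upperUnipotent_smul_mem_gspCongruenceSubgroup c hX)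

theorem siegelLevi_mem_commutator_of_row {A : GL l R} {k : l} {v : l → R}
    (hA : (A : Matrix l l R) = 1 + c ^ 2 • vecMulVec (Pi.single k 1) v) :
    siegelLevi A ∈ ⁅gspCongruenceSubgroup l c, gspCongruenceSubgroup l c⁆ := by
  set E : Matrix l l R := vecMulVec (Pi.single k 1) (Pi.single k 1) with hE
  -- A symmetric matrix whose `k`-th row is `v`.
  set Y : Matrix l l R :=
    vecMulVec (Pi.single k 1) v + vecMulVec v (Pi.single k 1) - v k • E with hYdef
  have hEsymm : E.IsSymm := by rw [IsSymm, hE, transpose_vecMulVec]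
  have hYsymm : Y.IsSymm := by
    rw [IsSymm, hYdef, transpose_sub, transpose_add, transpose_smul, hEsymm.eq,
      transpose_vecMulVec, transpose_vecMulVec, add_comm (vecMulVec v _)]
  have hEY : E * Y = vecMulVec (Pi.single k 1) v := by
    simp [hE, hYdef, mul_sub, mul_add, vecMulVec_mul_vecMulVec]
  refine siegelLevi_mem_commutator_of_mul hc hEsymm.neg hYsymm ?_
  rw [hA, neg_mul, hEY, smul_neg, sub_neg_eq_add]

theorem mem_commutator_gspCongruenceSubgroup {x : GL (l ⊕ l) R}
    (hsp : (x : Matrix (l ⊕ l) (l ⊕ l) R) ∈ symplecticGroup l R)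
    (hx : x ∈ principalCongruenceSubgroup (l ⊕ l) (c ^ 2)) :
    x ∈ ⁅gspCongruenceSubgroup l c, gspCongruenceSubgroup l c⁆ := by
  have hc2 : c ^ 2 ∈ (⊥ : Ideal R).jacobson := Ideal.pow_mem_of_mem _ hc 2 two_pos
  obtain ⟨P, hP⟩ := mem_principalCongruenceSubgroup_iff.1 hx
  obtain ⟨A, hA⟩ := isUnit_one_add_smul_of_mem_jacobson hc2 P.toBlocks₁₁
  have hblocks : (x : Matrix (l ⊕ l) (l ⊕ l) R) = fromBlocks A (c ^ 2 • P.toBlocks₁₂)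
      (c ^ 2 • P.toBlocks₂₁) (1 + c ^ 2 • P.toBlocks₂₂) := by
    rw [hP, hA, ← fromBlocks_one]
    nth_rw 1 [← fromBlocks_toBlocks P]
    simp only [fromBlocks_smul, fromBlocks_add, zero_add]
  rw [mem_iff_siegelLevi_mem (fun _ ↦ upperUnipotent_sq_smul_mem_commutator hc)
    (fun _ ↦ lowerUnipotent_sq_smul_mem_commutator hc) hsp hblocks, ← Subgroup.mem_comap]
  exact principalCongruenceSubgroup_le_of_row_mem hc2
    (fun _ _ _ ↦ siegelLevi_mem_commutator_of_row hc)
    (mem_principalCongruenceSubgroup_iff.2 ⟨_, hA⟩)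

end CommutatorSubgroup

section StandardForm

/-- The change of basis from `J` to `Ω`: the two halves are interleaved, the second half taking
the even places because `J = [[0, -1], [1, 0]]` is opposite in sign to the blocks of `Ω`. -/
def interleave (g : ℕ) : Fin g ⊕ Fin g ≃ Fin (2 * g) where
  toFun := Sum.elim (fun i ↦ ⟨2 * i + 1, by lia⟩) (fun i ↦ ⟨2 * i, by lia⟩)
  invFun j := if (j : ℕ) % 2 = 1 then Sum.inl ⟨j / 2, by lia⟩ else Sum.inr ⟨j / 2, by lia⟩
  left_inv := by
    rintro (i | i)
    · simp [Nat.mul_add_div]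
    · simp
  right_inv j := by
    ext
    by_cases h : (j : ℕ) % 2 = 1 <;> simp [h] <;> lia

theorem OmegaMat_eq_reindex_J (g : ℕ) (R : Type) [CommRing R] :
    OmegaMat g R = reindexAlgEquiv R R (interleave g) (J (Fin g) R) := by
  rw [← (reindexAlgEquiv R R (interleave g)).symm_apply_eq]
  ext (i | i) (j | j) <;>
    simp [interleave, OmegaMat, J, one_apply, Fin.ext_iff] <;> grind

theorem map_reindex_gspCongruenceSubgroup_le (g : ℕ) {R : Type} [CommRing R] (c : R) :
    (gspCongruenceSubgroup (Fin g) c).map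
        (generalLinearGroupReindex R (interleave g)).toMonoidHom ≤
      similitudeGroup (OmegaMat g R) ⊓ principalCongruenceSubgroup (Fin (2 * g)) c := by
  rintro _ ⟨x, ⟨⟨m, hm⟩, hx⟩, rfl⟩
  refine ⟨⟨m, ?_⟩, (generalLinearGroupReindex_mem_principalCongruenceSubgroup_iff _ x).2 hx⟩
  rw [OmegaMat_eq_reindex_J]
  exact (generalLinearGroupReindex_preserves_iff _ x _ _).2 hm

theorem generalLinearGroupReindex_mem_SpSet_iff (g : ℕ) {R : Type} [CommRing R]
    (x : GL (Fin g ⊕ Fin g) R) :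
    generalLinearGroupReindex R (interleave g) x ∈ SpSet g R ↔
      (x : Matrix (Fin g ⊕ Fin g) (Fin g ⊕ Fin g) R) ∈ symplecticGroup (Fin g) R := by
  have h := generalLinearGroupReindex_preserves_iff (interleave g) x 1 (J (Fin g) R)
  rwa [one_smul, one_smul, ← OmegaMat_eq_reindex_J, ← SymplecticGroup.mem_iff'] at h

end StandardForm

section TwoAdic

theorem two_mem_jacobson_bot : (2 : ℤ_[2]) ∈ (⊥ : Ideal ℤ_[2]).jacobson := by
  rw [IsLocalRing.jacobson_eq_maximalIdeal _ bot_ne_top, PadicInt.maximalIdeal_eq_span_p]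
  exact Ideal.mem_span_singleton_self _

theorem redMod2_eq_one_iff {g : ℕ} {x : GL (Fin (2 * g)) ℤ_[2]} :
    redMod2 g x = 1 ↔ x ∈ principalCongruenceSubgroup (Fin (2 * g)) (2 : ℤ_[2]) := by
  rw [mem_principalCongruenceSubgroup_iff]
  exact generalLinearGroup_map_eq_one_iff
    (PadicInt.ker_toZMod.trans PadicInt.maximalIdeal_eq_span_p)

theorem redMod4_eq_one_iff {g : ℕ} {x : GL (Fin (2 * g)) ℤ_[2]} :
    redMod4 g x = 1 ↔ x ∈ principalCongruenceSubgroup (Fin (2 * g)) ((2 : ℤ_[2]) ^ 2) := by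
  rw [mem_principalCongruenceSubgroup_iff]
  exact generalLinearGroup_map_eq_one_iff (PadicInt.ker_toZModPow 2)

end TwoAdic

theorem maximal_monodromy_stmt6_general (g : ℕ) {R : Type} [CommRing R] {c : R}
    (hc : c ∈ (⊥ : Ideal R).jacobson) (H : Subgroup (GL (Fin (2 * g)) R))
    (hker : similitudeGroup (OmegaMat g R) ⊓ principalCongruenceSubgroup (Fin (2 * g)) c ≤ H) :
    {x : GL (Fin (2 * g)) R |
        x ∈ SpSet g R ∧ x ∈ principalCongruenceSubgroup (Fin (2 * g)) (c ^ 2)} ⊆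
      (⁅H, H⁆ : Subgroup (GL (Fin (2 * g)) R)) := by
  rintro x ⟨hsp, hx⟩
  obtain ⟨y, rfl⟩ := (generalLinearGroupReindex R (interleave g)).surjective x
  have hy := mem_commutator_gspCongruenceSubgroup hc
    ((generalLinearGroupReindex_mem_SpSet_iff g y).1 hsp)
    ((generalLinearGroupReindex_mem_principalCongruenceSubgroup_iff _ y).1 hx)
  have hmap := (map_reindex_gspCongruenceSubgroup_le g c).trans hker
  refine Subgroup.commutator_mono hmap hmap ?_
  rw [← Subgroup.map_commutator]
  exact Subgroup.mem_map_of_mem _ hy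

/-- Let `g ≥ 2` and let `H ⊆ GSp_{2g}(ℤ_2)` be a subgroup containing the kernel of the
reduction map `GSp_{2g}(ℤ_2) → GSp_{2g}(ℤ/2ℤ)`. Then the closure of the commutator subgroup
of `H` contains the kernel of the reduction map `Sp_{2g}(ℤ_2) → Sp_{2g}(ℤ/4ℤ)`. -/
theorem maximal_monodromy_stmt6 (g : ℕ) (hg : 2 ≤ g)
    (H : Subgroup (GL (Fin (2*g)) ℤ_[2]))
    (hGSp : (H : Set (GL (Fin (2*g)) ℤ_[2])) ⊆ GSpSet g ℤ_[2])
    (hker : GSpKer g ≤ H) :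
    {x : GL (Fin (2*g)) ℤ_[2] | x ∈ SpSet g ℤ_[2] ∧ redMod4 g x = 1}
      ⊆ closure ((⁅H, H⁆ : Subgroup (GL (Fin (2*g)) ℤ_[2])) : Set (GL (Fin (2*g)) ℤ_[2])) := by
  rintro x ⟨hsp, hx⟩
  exact subset_closure <| maximal_monodromy_stmt6_general g two_mem_jacobson_bot H
    (fun y hy ↦ hker ⟨hy.1, redMod2_eq_one_iff.2 hy.2⟩) ⟨hsp, redMod4_eq_one_iff.1 hx⟩
end

section
/- Let g ≥ 2 and transport the permutation action of S_{2g+2} on W to M via the isomorphism ψ. Then for 1 ≤ n ≤ g, the transposition (2n, 2n+1) acts on M as the operator id + (x_{11} + x_{12} + x_{21} + x_{22}) ⊗ y_{nn}, and for 0 ≤ n ≤ g, the transposition (2n+1, 2n+2) acts on M as the operator id + x_{12} ⊗ (y_{nn} + y_{(n+1)n} + y_{n(n+1)} + y_{(n+1)(n+1)}), where any term whose index lies outside {1,…,g} is interpreted as zero. -/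
open Matrix

/-- The all-ones vector `t ∈ V = (ℤ/2ℤ)^{2g+2}`. -/
def tvec (g : ℕ) : Fin (2*g+2) → ZMod 2 := fun _ => 1

/-- The line spanned by `t`. -/
def tline (g : ℕ) : Submodule (ZMod 2) (Fin (2*g+2) → ZMod 2) :=
  Submodule.span (ZMod 2) {tvec g}

/-- `t^⊥`: the vectors of `V` orthogonal to `t` for the standard bilinear form
`⟨u,v⟩ = ∑ uᵢvᵢ`, i.e. those whose coordinates sum to zero. -/
def tperp (g : ℕ) : Set (Fin (2*g+2) → ZMod 2) := {v | ∑ i, v i = 0}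

/-- The matrix of the map `ψ : M → V` sending the symplectic basis vector `f_{1,n}`
(column `2n-2`, 0-based) of `M = (ℤ/2ℤ)^{2g}` to `ē_1 + ⋯ + ē_{2n}` and `f_{2,n}`
(column `2n-1`) to `ē_{2n+1} + ē_1 + ⋯ + ē_{2n-1}`; `ψ` composed with the quotient map
`t^⊥ → W = t^⊥/span(t)` is the identification of `M` with `W` used to realize the
isometries of `W` as the matrix group `Sp_{2g}(ℤ/2ℤ)`. -/
def PsiMat (g : ℕ) : Matrix (Fin (2*g+2)) (Fin (2*g)) (ZMod 2) :=
  Matrix.of fun k j =>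
    if (j : ℕ) % 2 = 0 then (if (k : ℕ) < (j : ℕ) + 2 then 1 else 0)
    else (if (k : ℕ) < (j : ℕ) ∨ (k : ℕ) = (j : ℕ) + 1 then 1 else 0)

/-- The permutation matrix of `σ`, acting on coordinates of `V`: `(P_σ v) k = v (σ⁻¹ k)`. -/
def permMat (g : ℕ) (σ : Equiv.Perm (Fin (2*g+2))) :
    Matrix (Fin (2*g+2)) (Fin (2*g+2)) (ZMod 2) :=
  Matrix.of fun k j => if σ j = k then 1 else 0

/-- `A ∈ Sp_{2g}(ℤ/2ℤ)` is the matrix (w.r.t. the symplectic basis carried by `ψ`) of the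
action of the permutation `σ ∈ S_{2g+2}` on `W = t^⊥/span(t)`: this says that each column of
`Ψ·A − P_σ·Ψ` lies in `span(t)`, i.e. `ψ(A·m) ≡ σ·ψ(m) mod t` for every `m ∈ M`.
The embedded copy of `S_{2g+2}` inside `Sp_{2g}(ℤ/2ℤ)` is the set of matrices representing
some permutation in this sense. -/
def representsPerm (g : ℕ) (A : Matrix (Fin (2*g)) (Fin (2*g)) (ZMod 2))
    (σ : Equiv.Perm (Fin (2*g+2))) : Prop :=
  ∀ j, (fun k => (PsiMat g * A - permMat g σ * PsiMat g) k j) ∈ tline g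

/-- The operator `id + (x_{11} + x_{12} + x_{21} + x_{22}) ⊗ y_{nn}` on `M` (for `1 ≤ n ≤ g`,
in `1`-based indexing; `0`-based, the `(k,j)` entry is `δ_{kj}` plus the indicator that both
`k` and `j` lie in the block `{2n-2, 2n-1}`). -/
def TEvenMat (g n : ℕ) : Matrix (Fin (2*g)) (Fin (2*g)) (ZMod 2) :=
  Matrix.of fun k j => (if k = j then 1 else 0) +
    (if (k : ℕ)/2 + 1 = n ∧ (j : ℕ)/2 + 1 = n then 1 else 0)

/-- The operator `id + x_{12} ⊗ (y_{nn} + y_{(n+1)n} + y_{n(n+1)} + y_{(n+1)(n+1)})` on `M`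
(any term with an out-of-range index being zero; `0`-based, the `(k,j)` entry is `δ_{kj}` plus
the indicator that `k ∈ {2n-2, 2n}` is an `x_1`-row and `j ∈ {2n-1, 2n+1}` is an `x_2`-column,
out-of-range indices being excluded automatically by the bounds on `Fin (2g)`). -/
def TOddMat (g n : ℕ) : Matrix (Fin (2*g)) (Fin (2*g)) (ZMod 2) :=
  Matrix.of fun k j => (if k = j then 1 else 0) +
    (if ((k : ℕ) + 2 = 2*n ∨ (k : ℕ) = 2*n) ∧ ((j : ℕ) + 1 = 2*n ∨ (j : ℕ) = 2*n + 1)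
      then 1 else 0)

/-!
A transposition `(a b)` acts on `V` as the transvection `v ↦ v + ⟨v, d⟩ d` along
`d = ē_a + ē_b`. If `ψ u ≡ d` modulo `t`, it therefore acts on `M` as the rank-one perturbation
`id + u ⊗ ⟨ψ(·), d⟩` of the identity. Modulo `t`, `ē_{2n} + ē_{2n+1}` is the image of
`f_{1,n} + f_{2,n}`, and `ē_{2n+1} + ē_{2n+2}` is the image of `f_{1,n} + f_{1,n+1}`, where the
conventions `f_{1,0} = f_{1,g+1} = 0` are consistent with `ψ f_{1,n} = ē_1 + ⋯ + ē_{2n}` modulo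
`t`, since the right-hand side is `0` for `n = 0` and `t` for `n = g + 1`.
-/

theorem matrix_swap_eq_one_sub_vecMulVec {ι R : Type*} [DecidableEq ι] [NonAssocRing R] (a b : ι) :
    swap R a b =
      1 - vecMulVec (Pi.single a 1 - Pi.single b 1) (Pi.single a 1 - Pi.single b 1) := by
  ext k j
  simp only [swap, PEquiv.toMatrix_toPEquiv_apply, Equiv.swap_apply_def, Matrix.sub_apply,
    one_apply, vecMulVec_apply, Pi.sub_apply, Pi.single_apply]
  obtain rfl | hka := eq_or_ne k a
  · obtain rfl | hkb := eq_or_ne k b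
    · simp [eq_comm]
    · simp [hkb, eq_comm]
  · obtain rfl | hkb := eq_or_ne k b
    · simp [hka, eq_comm]
    · simp [hka, hkb, eq_comm]

theorem permMat_eq_transpose_permMatrix (g : ℕ) (σ : Equiv.Perm (Fin (2 * g + 2))) :
    permMat g σ = (σ.permMatrix (ZMod 2))ᵀ := by
  ext k j
  simp [permMat, eq_comm]

theorem permMat_swap (g : ℕ) (a b : Fin (2 * g + 2)) :
    permMat g (Equiv.swap a b) =
      1 + vecMulVec (Pi.single a 1 + Pi.single b 1) (Pi.single a 1 + Pi.single b 1) := by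
  rw [permMat_eq_transpose_permMatrix, ← swap, transpose_swap, matrix_swap_eq_one_sub_vecMulVec]
  simp only [CharTwo.sub_eq_add]

theorem representsPerm_swap {g : ℕ} {a b : Fin (2 * g + 2)} {u : Fin (2 * g) → ZMod 2}
    (hu : PsiMat g *ᵥ u ≡ Pi.single a 1 + Pi.single b 1 [SMOD tline g]) :
    representsPerm g (1 + vecMulVec u ((PsiMat g).row a + (PsiMat g).row b))
      (Equiv.swap a b) := by
  intro j
  set d : Fin (2 * g + 2) → ZMod 2 := Pi.single a 1 + Pi.single b 1
  set φ : Fin (2 * g) → ZMod 2 := (PsiMat g).row a + (PsiMat g).row b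
  have hφ : d ᵥ* PsiMat g = φ := by
    simp only [d, φ, add_vecMul, single_one_vecMul]
  have hdiff : PsiMat g * (1 + vecMulVec u φ) - permMat g (Equiv.swap a b) * PsiMat g =
      vecMulVec (PsiMat g *ᵥ u - d) φ := by
    rw [permMat_swap, Matrix.mul_add, Matrix.add_mul, Matrix.mul_one, Matrix.one_mul,
      mul_vecMulVec, vecMulVec_mul, hφ, add_sub_add_left_eq_sub, sub_vecMulVec]
  have hcol : (fun k => vecMulVec (PsiMat g *ᵥ u - d) φ k j) = φ j • (PsiMat g *ᵥ u - d) := by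
    ext k
    simp only [vecMulVec_apply, Pi.smul_apply, smul_eq_mul, mul_comm]
  rw [hdiff, hcol]
  exact (tline g).smul_mem _ (SModEq.sub_mem.mp hu)

/-- The basis vector `f_{1,n}` of `M`, at the 0-based position `2n-2`. It is `0` when `n` is outside
`{1, …, g}`, which is the paper's convention for out-of-range indices. -/
def fOne (g n : ℕ) : Fin (2 * g) → ZMod 2 := fun k => if (k : ℕ) + 2 = 2 * n then 1 else 0

/-- The basis vector `f_{2,n}` of `M`, at the 0-based position `2n-1`. It is `0` when `n` is outside
`{1, …, g}`, which is the paper's convention for out-of-range indices. -/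
def fTwo (g n : ℕ) : Fin (2 * g) → ZMod 2 := fun k => if (k : ℕ) + 1 = 2 * n then 1 else 0

/-- The vector `ē_1 + ⋯ + ē_m` of `V`, through which `ψ` is defined. -/
def initialSum (g m : ℕ) : Fin (2 * g + 2) → ZMod 2 := fun k => if (k : ℕ) < m then 1 else 0

theorem initialSum_zero (g : ℕ) : initialSum g 0 = 0 := by
  ext k
  simp [initialSum]

theorem initialSum_two_mul_add_two (g : ℕ) : initialSum g (2 * g + 2) = tvec g := by
  ext k
  simp [initialSum, tvec]

theorem initialSum_succ {g m : ℕ} (hm : m < 2 * g + 2) :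
    initialSum g (m + 1) = initialSum g m + Pi.single ⟨m, hm⟩ 1 := by
  ext k
  simp only [initialSum, Pi.add_apply, Pi.single_apply, Fin.ext_iff]
  split_ifs <;> first | omega | rfl

theorem fOne_zero (g : ℕ) : fOne g 0 = 0 := by
  ext k
  simp [fOne]

theorem fOne_eq_zero_of_lt {g n : ℕ} (hn : g < n) : fOne g n = 0 := by
  ext k
  exact if_neg (by omega)

theorem fOne_succ {g n : ℕ} (hn : n < g) :
    fOne g (n + 1) = Pi.single ⟨2 * n, by omega⟩ 1 := by
  ext k
  simp [fOne, Pi.single_apply, Fin.ext_iff, mul_add]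

theorem psiMat_mulVec_fOne_succ {g n : ℕ} (hn : n < g) :
    PsiMat g *ᵥ fOne g (n + 1) = initialSum g (2 * (n + 1)) := by
  ext k
  simp [fOne_succ hn, PsiMat, initialSum, mul_add]

theorem fTwo_succ {g n : ℕ} (hn : n < g) :
    fTwo g (n + 1) = Pi.single ⟨2 * n + 1, by omega⟩ 1 := by
  ext k
  simp [fTwo, Pi.single_apply, Fin.ext_iff, mul_add]

theorem psiMat_mulVec_fTwo_succ {g n : ℕ} (hn : n < g) :
    PsiMat g *ᵥ fTwo g (n + 1) =
      initialSum g (2 * n + 1) + Pi.single ⟨2 * n + 2, by omega⟩ 1 := by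
  ext k
  simp only [fTwo_succ hn, mulVec_single_one, col_apply, PsiMat, of_apply, initialSum, Pi.add_apply,
    Pi.single_apply, Fin.ext_iff]
  split_ifs <;> first | omega | rfl

theorem psiMat_mulVec_fOne_smodEq {g n : ℕ} (hn : n ≤ g + 1) :
    PsiMat g *ᵥ fOne g n ≡ initialSum g (2 * n) [SMOD tline g] := by
  obtain _ | n := n
  · simp [fOne_zero, initialSum_zero]
  obtain hlt | rfl := Nat.lt_or_eq_of_le (Nat.le_of_succ_le_succ hn)
  · rw [psiMat_mulVec_fOne_succ hlt]
  · rw [fOne_eq_zero_of_lt n.lt_succ_self, mulVec_zero, mul_add_one, initialSum_two_mul_add_two]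
    exact (SModEq.zero.mpr (Submodule.mem_span_singleton_self _)).symm

theorem psiMat_mulVec_fOne_add_fTwo {g n : ℕ} (hn : n < g) :
    PsiMat g *ᵥ (fOne g (n + 1) + fTwo g (n + 1)) =
      Pi.single ⟨2 * n + 1, by omega⟩ 1 + Pi.single ⟨2 * n + 2, by omega⟩ 1 := by
  rw [mulVec_add, psiMat_mulVec_fOne_succ hn, psiMat_mulVec_fTwo_succ hn, mul_add_one,
    initialSum_succ (by omega : 2 * n + 1 < 2 * g + 2), add_add_add_comm,
    CharTwo.add_self_eq_zero, zero_add]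

theorem psiMat_mulVec_fOne_add_fOne_succ_smodEq {g n : ℕ} (hn : n < g + 1) :
    PsiMat g *ᵥ (fOne g n + fOne g (n + 1)) ≡
      Pi.single ⟨2 * n, by omega⟩ 1 + Pi.single ⟨2 * n + 1, by omega⟩ 1 [SMOD tline g] := by
  have hsum : initialSum g (2 * n) + initialSum g (2 * (n + 1)) =
      Pi.single ⟨2 * n, by omega⟩ 1 + Pi.single ⟨2 * n + 1, by omega⟩ 1 := by
    rw [mul_add_one, initialSum_succ (by omega : 2 * n + 1 < 2 * g + 2),
      initialSum_succ (by omega : 2 * n < 2 * g + 2), add_assoc, ← add_assoc,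
      CharTwo.add_self_eq_zero, zero_add]
  rw [mulVec_add, ← hsum]
  exact (psiMat_mulVec_fOne_smodEq (by omega)).add (psiMat_mulVec_fOne_smodEq (by omega))

theorem psiMat_row_odd_add_row_even {g n : ℕ} (hn : n < g) :
    (PsiMat g).row ⟨2 * n + 1, by omega⟩ + (PsiMat g).row ⟨2 * n + 2, by omega⟩ =
      fOne g (n + 1) + fTwo g (n + 1) := by
  ext j
  simp only [Pi.add_apply, row_apply, PsiMat, of_apply, fOne, fTwo]
  split_ifs <;> first | omega | decide

theorem psiMat_row_even_add_row_odd {g n : ℕ} (hn : n < g + 1) :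
    (PsiMat g).row ⟨2 * n, by omega⟩ + (PsiMat g).row ⟨2 * n + 1, by omega⟩ =
      fTwo g n + fTwo g (n + 1) := by
  ext j
  simp only [Pi.add_apply, row_apply, PsiMat, of_apply, fTwo]
  split_ifs <;> first | omega | decide

theorem tEvenMat_eq_one_add_vecMulVec (g n : ℕ) :
    TEvenMat g n = 1 + vecMulVec (fOne g n + fTwo g n) (fOne g n + fTwo g n) := by
  ext k j
  simp only [TEvenMat, of_apply, Matrix.add_apply, one_apply, vecMulVec_apply, Pi.add_apply,
    fOne, fTwo]
  congr 1
  split_ifs <;> first | omega | decide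

theorem tOddMat_eq_one_add_vecMulVec (g n : ℕ) :
    TOddMat g n = 1 + vecMulVec (fOne g n + fOne g (n + 1)) (fTwo g n + fTwo g (n + 1)) := by
  ext k j
  simp only [TOddMat, of_apply, Matrix.add_apply, one_apply, vecMulVec_apply, Pi.add_apply,
    fOne, fTwo]
  congr 1
  split_ifs <;> first | omega | decide

theorem representsPerm_tEvenMat_succ {g n : ℕ} (hn : n < g) :
    representsPerm g (TEvenMat g (n + 1))
      (Equiv.swap ⟨2 * n + 1, by omega⟩ ⟨2 * n + 2, by omega⟩) := by
  rw [tEvenMat_eq_one_add_vecMulVec]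
  nth_rw 2 [← psiMat_row_odd_add_row_even hn]
  exact representsPerm_swap (by rw [psiMat_mulVec_fOne_add_fTwo hn])

theorem representsPerm_tOddMat {g n : ℕ} (hn : n < g + 1) :
    representsPerm g (TOddMat g n)
      (Equiv.swap ⟨2 * n, by omega⟩ ⟨2 * n + 1, by omega⟩) := by
  rw [tOddMat_eq_one_add_vecMulVec, ← psiMat_row_even_add_row_odd hn]
  exact representsPerm_swap (psiMat_mulVec_fOne_add_fOne_succ_smodEq hn)

/-- Transporting the permutation action of `S_{2g+2}` on `W` to `M` via the isomorphism `ψ`: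
for `1 ≤ n ≤ g` the transposition `(2n, 2n+1)` (1-based) acts on `M` as
`id + (x_{11}+x_{12}+x_{21}+x_{22}) ⊗ y_{nn}`, and for `0 ≤ n ≤ g` the transposition
`(2n+1, 2n+2)` (1-based) acts on `M` as
`id + x_{12} ⊗ (y_{nn} + y_{(n+1)n} + y_{n(n+1)} + y_{(n+1)(n+1)})`,
terms with out-of-range indices being zero. -/
theorem maximal_monodromy_stmt9 (g : ℕ) (hg : 2 ≤ g) :
    (∀ n : ℕ, 1 ≤ n → (h2 : n ≤ g) →
      representsPerm g (TEvenMat g n)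
        (Equiv.swap (⟨2*n-1, by omega⟩ : Fin (2*g+2)) (⟨2*n, by omega⟩ : Fin (2*g+2)))) ∧
    (∀ n : ℕ, (h2 : n ≤ g) →
      representsPerm g (TOddMat g n)
        (Equiv.swap (⟨2*n, by omega⟩ : Fin (2*g+2)) (⟨2*n+1, by omega⟩ : Fin (2*g+2)))) := by
  refine ⟨fun n h1 h2 => ?_, fun n h2 => representsPerm_tOddMat (Nat.lt_succ_of_le h2)⟩
  obtain ⟨m, rfl⟩ := Nat.exists_eq_add_of_le' h1
  exact representsPerm_tEvenMat_succ h2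
end

section
/- Let g ≥ 2 and let G ⊆ GSp_{2g}(ℤ/4ℤ) be a subgroup containing the kernel of the reduction map GSp_{2g}(ℤ/4ℤ) → GSp_{2g}(ℤ/2ℤ), and suppose that the image of G in Sp_{2g}(ℤ/2ℤ) contains the embedded copy of S_{2g+1}. Then the commutator subgroup [G,G] contains the kernel of the reduction map Sp_{2g}(ℤ/4ℤ) → Sp_{2g}(ℤ/2ℤ). -/
open Matrix

/-- Entrywise reduction `GL_{2g}(ℤ/4ℤ) → GL_{2g}(ℤ/2ℤ)`. -/
def red42 (g : ℕ) : GL (Fin (2*g)) (ZMod 4) →* GL (Fin (2*g)) (ZMod 2) :=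
  Units.map ((ZMod.castHom (show (2:ℕ) ∣ 4 by norm_num) (ZMod 2)).mapMatrix.toMonoidHom)

/-!
The kernel of reduction `Sp_{2g}(ℤ/4ℤ) → Sp_{2g}(ℤ/2ℤ)` consists of the matrices `1 + 2SΩ` with
`S` symmetric over `ℤ/2ℤ`, and `{Y | 1 + 2Y ∈ [G, G]}` is a subspace. Given `w ≠ 0`, choose `D` with
`DᵀΩ + ΩD = Ω` and `Dw = 0`: then `1 + 2D ∈ G` is a similitude of multiplier `-1`, and its
commutator with any lift to `G` of the transvection `1 + wwᵀΩ` is `1 + 2wwᵀΩ`. The transposition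
`(a b)` acts on `t^⊥ / span t` as the transvection along `ē_a + ē_b`, so this applies to every
`w` with `ψ(w) = ē_a + ē_b` and `a, b ≤ 2g + 1`. The vectors `ψ⁻¹(ē_1 + ē_k)` span `(ℤ/2ℤ)^{2g}`,
and by polarization the squares `wwᵀ` of these vectors and of their pairwise sums span all symmetric
matrices.
-/

namespace MaximalMonodromy

section SymmetricMatrices

variable {n R : Type*}

lemma exists_eq_add_transpose_add_diagonal [LinearOrder n] [AddCommMonoid R]
    {S : Matrix n n R} (hS : S.IsSymm) : ∃ L : Matrix n n R, S = L + Lᵀ + diagonal S.diag := by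
  refine ⟨of fun i j => if i < j then S i j else 0, ?_⟩
  ext i j
  rcases lt_trichotomy i j with h | rfl | h
  · simp [h, h.ne, h.not_gt]
  · simp
  · simp [h, h.ne', h.not_gt, hS.apply]

lemma exists_isSymm_mulVec_eq {K : Type*} [Field K] [Fintype n] {w : n → K}
    (hw : w ≠ 0) (b : n → K) : ∃ S : Matrix n n K, S.IsSymm ∧ S *ᵥ w = b := by
  classical
  obtain ⟨i, hi⟩ := Function.ne_iff.mp hw
  let c : n → K := Pi.single i (w i)⁻¹
  have hc : c ⬝ᵥ w = 1 := by simpa [c] using inv_mul_cancel₀ hi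
  refine ⟨vecMulVec b c + vecMulVec c b - (b ⬝ᵥ w) • vecMulVec c c, ?_, ?_⟩
  · simp only [IsSymm, transpose_sub, transpose_add, transpose_smul, transpose_vecMulVec,
      add_comm]
  · simp [sub_mulVec, add_mulVec, smul_mulVec, vecMulVec_mulVec, hc]

variable [CommRing R] {P : Submodule R (Matrix n n R)} {U : Set (n → R)}

lemma vecMulVec_add_vecMulVec_mem (hsq : ∀ x ∈ U, vecMulVec x x ∈ P)
    (hadd : ∀ x ∈ U, ∀ y ∈ U, vecMulVec (x + y) (x + y) ∈ P) {x y : n → R}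
    (hx : x ∈ Submodule.span R U) (hy : y ∈ Submodule.span R U) :
    vecMulVec x y + vecMulVec y x ∈ P := by
  induction hx, hy using Submodule.span_induction₂ with
  | mem_mem x y hx hy =>
    have polarization : vecMulVec x y + vecMulVec y x =
        vecMulVec (x + y) (x + y) - vecMulVec x x - vecMulVec y y := by
      simp only [add_vecMulVec, vecMulVec_add]
      abel
    rw [polarization]
    exact P.sub_mem (P.sub_mem (hadd x hx y hy) (hsq x hx)) (hsq y hy)
  | zero_left | zero_right => simp
  | add_left x₁ x₂ y _ _ _ h₁ h₂ =>
    rw [add_vecMulVec, vecMulVec_add, add_add_add_comm]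
    exact P.add_mem h₁ h₂
  | add_right x y₁ y₂ _ _ _ h₁ h₂ =>
    rw [add_vecMulVec, vecMulVec_add, add_add_add_comm]
    exact P.add_mem h₁ h₂
  | smul_left c x y _ _ h | smul_right c x y _ _ h =>
    rw [smul_vecMulVec, vecMulVec_smul, ← smul_add]
    exact P.smul_mem c h

lemma vecMulVec_self_mem (hsq : ∀ x ∈ U, vecMulVec x x ∈ P)
    (hadd : ∀ x ∈ U, ∀ y ∈ U, vecMulVec (x + y) (x + y) ∈ P) {x : n → R}
    (hx : x ∈ Submodule.span R U) : vecMulVec x x ∈ P := by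
  induction hx using Submodule.span_induction with
  | mem x hx => exact hsq x hx
  | zero => simp
  | add x y hx hy hxx hyy =>
    have expand : vecMulVec (x + y) (x + y) =
        vecMulVec x x + vecMulVec y y + (vecMulVec x y + vecMulVec y x) := by
      simp only [add_vecMulVec, vecMulVec_add]
      abel
    rw [expand]
    exact P.add_mem (P.add_mem hxx hyy) (vecMulVec_add_vecMulVec_mem hsq hadd hx hy)
  | smul c x _ hx =>
    rw [smul_vecMulVec, vecMulVec_smul]
    exact P.smul_mem c (P.smul_mem c hx)

lemma mem_of_isSymm_of_span_eq_top [Finite n] (hU : Submodule.span R U = ⊤)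
    (hsq : ∀ x ∈ U, vecMulVec x x ∈ P)
    (hadd : ∀ x ∈ U, ∀ y ∈ U, vecMulVec (x + y) (x + y) ∈ P)
    {S : Matrix n n R} (hS : S.IsSymm) : S ∈ P := by
  classical
  let _ : LinearOrder n := linearOrderOfSTO WellOrderingRel
  have mem_span (x : n → R) : x ∈ Submodule.span R U := hU ▸ Submodule.mem_top
  have single_eq (i j : n) (c : R) :
      single i j c = c • vecMulVec (Pi.single i 1) (Pi.single j 1) := by
    rw [← single_eq_single_vecMulVec_single, smul_single, smul_eq_mul, mul_one]
  have add_transpose_mem (L : Matrix n n R) : L + Lᵀ ∈ P := by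
    induction L using Matrix.induction_on' with
    | h_zero => simp
    | h_add p q hp hq =>
      rw [transpose_add, add_add_add_comm]
      exact P.add_mem hp hq
    | h_std_basis i j c =>
      rw [transpose_single, single_eq, single_eq, ← smul_add]
      exact P.smul_mem c (vecMulVec_add_vecMulVec_mem hsq hadd (mem_span _) (mem_span _))
  have diagonal_mem (d : n → R) : diagonal d ∈ P := by
    cases nonempty_fintype n
    rw [← sum_single_eq_diagonal]
    refine P.sum_mem fun i _ => ?_
    rw [single_eq]
    exact P.smul_mem _ (vecMulVec_self_mem hsq hadd (mem_span _))
  obtain ⟨L, hL⟩ := exists_eq_add_transpose_add_diagonal hS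
  rw [hL]
  exact P.add_mem (add_transpose_mem L) (diagonal_mem _)

end SymmetricMatrices

section CongruenceKernel

variable {n : Type*}

/-- The inclusion `a ↦ 2a` of `ℤ/2ℤ` into `ℤ/4ℤ`, applied entrywise: it identifies matrices over
`ℤ/2ℤ` with the matrices over `ℤ/4ℤ` that vanish modulo 2. -/
def double : Matrix n n (ZMod 2) →+ Matrix n n (ZMod 4) :=
  AddMonoidHom.mapMatrix
    { toFun := fun a => 2 * a.cast
      map_zero' := by decide
      map_add' := by decide }

lemma double_injective : Function.Injective (double (n := n)) := by
  have inj : ∀ a b : ZMod 2, (2 * a.cast : ZMod 4) = 2 * b.cast → a = b := by decide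
  intro Y Z h
  ext i j
  exact inj _ _ (congrFun₂ h i j)

lemma transpose_double (Y : Matrix n n (ZMod 2)) : (double Y)ᵀ = double Yᵀ := rfl

variable [Fintype n] [DecidableEq n]

/-- Entrywise reduction of matrices from `ℤ/4ℤ` to `ℤ/2ℤ`. -/
def reduction : Matrix n n (ZMod 4) →+* Matrix n n (ZMod 2) :=
  (ZMod.castHom (show 2 ∣ 4 by norm_num) (ZMod 2)).mapMatrix

lemma double_reduction (X : Matrix n n (ZMod 4)) : double (reduction X) = X + X := by
  have twice : ∀ a : ZMod 4, (2 * (a.cast : ZMod 2).cast : ZMod 4) = a + a := by decide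
  ext i j
  exact twice _

lemma reduction_double (Y : Matrix n n (ZMod 2)) : reduction (double Y) = 0 := by
  have even : ∀ a : ZMod 2, ((2 * a.cast : ZMod 4).cast : ZMod 2) = 0 := by decide
  ext i j
  exact even _

lemma reduction_surjective : Function.Surjective (reduction (n := n)) := by
  have lift : ∀ a : ZMod 2, ((a.cast : ZMod 4).cast : ZMod 2) = a := by decide
  intro Y
  refine ⟨Y.map fun a => (a.cast : ZMod 4), ?_⟩
  ext i j
  exact lift _

lemma exists_double_eq {X : Matrix n n (ZMod 4)} (hX : reduction X = 0) : ∃ Y, double Y = X := by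
  have half : ∀ a : ZMod 4, (a.cast : ZMod 2) = 0 → ∃ b : ZMod 2, (2 * b.cast : ZMod 4) = a := by
    decide
  choose Y hY using fun i j => half (X i j) (congrFun₂ hX i j)
  exact ⟨of Y, by ext i j; exact hY i j⟩

lemma mul_double (X : Matrix n n (ZMod 4)) (Y : Matrix n n (ZMod 2)) :
    X * double Y = double (reduction X * Y) := by
  obtain ⟨Z, rfl⟩ := reduction_surjective Y
  rw [double_reduction, ← map_mul, double_reduction, mul_add]

lemma double_mul (Y : Matrix n n (ZMod 2)) (X : Matrix n n (ZMod 4)) :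
    double Y * X = double (Y * reduction X) := by
  obtain ⟨Z, rfl⟩ := reduction_surjective Y
  rw [double_reduction, ← map_mul, double_reduction, add_mul]

/-- The embedding `Y ↦ 1 + 2Y` of the additive group of matrices over `ℤ/2ℤ` into `GL(ℤ/4ℤ)`,
whose image is the kernel of reduction modulo 2. -/
def oneAddDouble : Multiplicative (Matrix n n (ZMod 2)) →* GL n (ZMod 4) :=
  MonoidHom.toHomUnits
    { toFun := fun Y => 1 + double Y.toAdd
      map_one' := by simp
      map_mul' := fun Y Z => by
        rw [toAdd_mul, map_add, add_mul, one_mul, mul_add, mul_one, double_mul, reduction_double,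
          mul_zero, map_zero, add_zero, add_assoc, add_comm (double Z.toAdd)] }

lemma coe_oneAddDouble (Y : Matrix n n (ZMod 2)) :
    (oneAddDouble (.ofAdd Y) : Matrix n n (ZMod 4)) = 1 + double Y := rfl

/-- The matrices `Y` over `ℤ/2ℤ` such that `1 + 2Y` lies in the subgroup `H` of `GL(ℤ/4ℤ)`. -/
def levelSubmodule (H : Subgroup (GL n (ZMod 4))) :
    Submodule (ZMod 2) (Matrix n n (ZMod 2)) :=
  AddSubgroup.toZModSubmodule 2 (H.comap oneAddDouble).toAddSubgroup'

lemma mem_levelSubmodule {H : Subgroup (GL n (ZMod 4))} {Y : Matrix n n (ZMod 2)} :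
    Y ∈ levelSubmodule H ↔ oneAddDouble (.ofAdd Y) ∈ H := Iff.rfl

lemma conj_oneAddDouble (h : GL n (ZMod 4)) (Y : Matrix n n (ZMod 2)) :
    h * oneAddDouble (.ofAdd Y) * h⁻¹ =
      oneAddDouble (.ofAdd (reduction h.val * Y * reduction (h⁻¹).val)) := by
  ext1
  simp only [Units.val_mul, coe_oneAddDouble, mul_add, add_mul, mul_one, Units.mul_inv,
    mul_double, double_mul]

lemma conj_sub_self_mem_levelSubmodule_commutator {G : Subgroup (GL n (ZMod 4))}
    {h : GL n (ZMod 4)} (hh : h ∈ G) {Y : Matrix n n (ZMod 2)} (hY : Y ∈ levelSubmodule G) :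
    reduction h.val * Y * reduction (h⁻¹).val - Y ∈ levelSubmodule ⁅G, G⁆ := by
  rw [mem_levelSubmodule, ofAdd_sub, map_div, ← conj_oneAddDouble, div_eq_mul_inv,
    ← commutatorElement_def]
  exact Subgroup.commutator_mem_commutator hh (mem_levelSubmodule.mp hY)

end CongruenceKernel

section Symplectic

variable {g : ℕ} {R : Type} [CommRing R]

lemma exists_OmegaMat_eq_sub_transpose (g : ℕ) (R : Type) [CommRing R] :
    ∃ L : Matrix (Fin (2 * g)) (Fin (2 * g)) R, OmegaMat g R = L - Lᵀ := by
  refine ⟨of fun i j => if (i : ℕ) + 1 = j ∧ (j : ℕ) % 2 = 1 then 1 else 0, ?_⟩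
  ext i j
  simp only [OmegaMat, of_apply, Matrix.sub_apply, transpose_apply]
  grind

lemma transpose_OmegaMat : (OmegaMat g R)ᵀ = -OmegaMat g R := by
  obtain ⟨L, hL⟩ := exists_OmegaMat_eq_sub_transpose g R
  rw [hL, transpose_sub, transpose_transpose, neg_sub]

lemma dotProduct_OmegaMat_mulVec_self (w : Fin (2 * g) → R) :
    w ⬝ᵥ (OmegaMat g R *ᵥ w) = 0 := by
  obtain ⟨L, hL⟩ := exists_OmegaMat_eq_sub_transpose g R
  rw [hL, sub_mulVec, dotProduct_sub, mulVec_transpose, dotProduct_comm w (w ᵥ* L),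
    dotProduct_mulVec, sub_self]

lemma map_OmegaMat {S : Type} [CommRing S] (f : R →+* S) :
    f.mapMatrix (OmegaMat g R) = OmegaMat g S := by
  ext i j
  simp only [OmegaMat, RingHom.mapMatrix_apply, map_apply, of_apply, apply_ite f, map_one,
    map_neg, map_zero]

/-- The index in the same `2 × 2` diagonal block of `OmegaMat g R` as `i` but distinct from it. -/
def blockPartner (i : Fin (2 * g)) : Fin (2 * g) :=
  ⟨if (i : ℕ) % 2 = 0 then i + 1 else i - 1, by split_ifs <;> omega⟩

lemma OmegaMat_apply (i j : Fin (2 * g)) :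
    OmegaMat g R i j = if j = blockPartner i then (if (i : ℕ) % 2 = 0 then 1 else -1) else 0 := by
  simp only [OmegaMat, of_apply, blockPartner, Fin.ext_iff]
  split_ifs <;> first | omega | rfl

lemma OmegaMat_mul_self : OmegaMat g R * OmegaMat g R = -1 := by
  have blockPartner_blockPartner (i : Fin (2 * g)) : blockPartner (blockPartner i) = i := by
    simp only [blockPartner, Fin.ext_iff]
    split_ifs <;> omega
  ext i j
  simp only [mul_apply, OmegaMat_apply, ite_mul, zero_mul, Finset.sum_ite_eq', Finset.mem_univ,
    if_true, blockPartner_blockPartner, Matrix.neg_apply, one_apply, eq_comm (a := i)]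
  simp only [blockPartner]
  split_ifs <;> first | omega | simp

/-- The endomorphism `x ↦ ω(w, x) w` attached to `w`, the tangent direction of the symplectic
transvection along `w`. -/
def infTransvection (w : Fin (2 * g) → R) : Matrix (Fin (2 * g)) (Fin (2 * g)) R :=
  vecMulVec w w * OmegaMat g R

lemma infTransvection_mul_self (w : Fin (2 * g) → R) :
    infTransvection w * infTransvection w = 0 := by
  rw [infTransvection, ← Matrix.mul_assoc, Matrix.mul_assoc (vecMulVec w w), mul_vecMulVec,
    vecMulVec_mul_vecMulVec, dotProduct_OmegaMat_mulVec_self, zero_smul, vecMulVec_zero,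
    Matrix.zero_mul]

/-- The symplectic transvection `x ↦ x + ω(w, x) w`. -/
def transvectionGL (w : Fin (2 * g) → R) : GL (Fin (2 * g)) R where
  val := 1 + infTransvection w
  inv := 1 - infTransvection w
  val_inv := by simp [add_mul, mul_sub, infTransvection_mul_self]
  inv_val := by simp [sub_mul, mul_add, infTransvection_mul_self]

lemma conj_transvectionGL_sub_self {w : Fin (2 * g) → R} {D : Matrix (Fin (2 * g)) (Fin (2 * g)) R}
    (hD : Dᵀ * OmegaMat g R + OmegaMat g R * D = OmegaMat g R) (hw : D *ᵥ w = 0) :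
    (transvectionGL w).val * D * (transvectionGL w)⁻¹.val - D = infTransvection w := by
  have mul_inf : D * infTransvection w = 0 := by
    rw [infTransvection, ← Matrix.mul_assoc, mul_vecMulVec, hw, zero_vecMulVec, Matrix.zero_mul]
  have inf_mul : infTransvection w * D = infTransvection w := by
    rw [infTransvection, Matrix.mul_assoc, eq_sub_of_add_eq' hD, mul_sub, ← Matrix.mul_assoc _ Dᵀ,
      vecMulVec_mul _ _ Dᵀ, vecMul_transpose, hw, vecMulVec_zero, Matrix.zero_mul, sub_zero]
  change (1 + infTransvection w) * D * (1 - infTransvection w) - D = _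
  rw [add_mul, one_mul, inf_mul, mul_sub, mul_one, add_mul, mul_inf, infTransvection_mul_self]
  abel

lemma exists_infinitesimal_similitude {K : Type} [Field K] {w : Fin (2 * g) → K} (hw : w ≠ 0) :
    ∃ D : Matrix (Fin (2 * g)) (Fin (2 * g)) K,
      Dᵀ * OmegaMat g K + OmegaMat g K * D = OmegaMat g K ∧ D *ᵥ w = 0 := by
  obtain ⟨L, hL⟩ := exists_OmegaMat_eq_sub_transpose g K
  obtain ⟨S, hS, hSw⟩ := exists_isSymm_mulVec_eq hw (L *ᵥ w)
  have sub_mulVec_eq_zero : (L - S) *ᵥ w = 0 := by rw [sub_mulVec, hSw, sub_self]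
  have sub_sub_transpose : (L - S) - (L - S)ᵀ = OmegaMat g K := by
    rw [transpose_sub, hS.eq, sub_sub_sub_cancel_right, hL]
  refine ⟨-(OmegaMat g K * (L - S)), ?_, ?_⟩
  · simp only [transpose_neg, transpose_mul, transpose_OmegaMat, mul_neg, neg_neg]
    rw [Matrix.mul_assoc, OmegaMat_mul_self, ← Matrix.mul_assoc, OmegaMat_mul_self,
      neg_one_mul, neg_neg, mul_neg_one, neg_add_eq_sub, sub_sub_transpose]
  · rw [neg_mulVec, ← mulVec_mulVec, sub_mulVec_eq_zero, mulVec_zero, neg_zero]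

lemma isSymm_mul_OmegaMat {X : Matrix (Fin (2 * g)) (Fin (2 * g)) R}
    (hX : Xᵀ * OmegaMat g R + OmegaMat g R * X = 0) : (X * OmegaMat g R).IsSymm := by
  have conj : OmegaMat g R * (Xᵀ * OmegaMat g R + OmegaMat g R * X) * OmegaMat g R =
      -(OmegaMat g R * Xᵀ + X * OmegaMat g R) := by
    rw [mul_add, add_mul, ← Matrix.mul_assoc _ (OmegaMat g R) X, OmegaMat_mul_self,
      Matrix.mul_assoc, Matrix.mul_assoc Xᵀ, OmegaMat_mul_self]
    simp only [mul_neg, neg_mul, mul_one, one_mul, neg_add]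
  rw [hX, Matrix.mul_zero, Matrix.zero_mul, zero_eq_neg] at conj
  rw [IsSymm, transpose_mul, transpose_OmegaMat, neg_mul]
  exact neg_eq_of_add_eq_zero_right conj

end Symplectic

section Level

variable {g : ℕ}

lemma red42_eq_one_iff {x : GL (Fin (2 * g)) (ZMod 4)} :
    red42 g x = 1 ↔ ∃ Y, oneAddDouble (.ofAdd Y) = x := by
  have coe_red42 (y : GL (Fin (2 * g)) (ZMod 4)) : (red42 g y).val = reduction y.val := rfl
  rw [Units.ext_iff, coe_red42, Units.val_one]
  constructor
  · intro hx
    obtain ⟨Y, hY⟩ := exists_double_eq (X := x.val - 1) (by rw [map_sub, hx, map_one, sub_self])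
    exact ⟨Y, Units.ext (by rw [coe_oneAddDouble, hY, add_sub_cancel])⟩
  · rintro ⟨Y, rfl⟩
    rw [coe_oneAddDouble, map_add, map_one, reduction_double, add_zero]

lemma reduction_OmegaMat : reduction (OmegaMat g (ZMod 4)) = OmegaMat g (ZMod 2) :=
  map_OmegaMat _

lemma transpose_oneAddDouble_mul_OmegaMat_mul (X : Matrix (Fin (2 * g)) (Fin (2 * g)) (ZMod 2)) :
    (oneAddDouble (.ofAdd X)).valᵀ * OmegaMat g (ZMod 4) * (oneAddDouble (.ofAdd X)).val =
      OmegaMat g (ZMod 4) + double (Xᵀ * OmegaMat g (ZMod 2) + OmegaMat g (ZMod 2) * X) := by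
  simp only [coe_oneAddDouble, transpose_add, transpose_one, transpose_double, add_mul, mul_add,
    one_mul, mul_one, double_mul, mul_double, reduction_OmegaMat, map_add,
    reduction_double, zero_mul, add_zero, map_zero]
  abel

lemma oneAddDouble_mem_SpSet_iff {X : Matrix (Fin (2 * g)) (Fin (2 * g)) (ZMod 2)} :
    oneAddDouble (.ofAdd X) ∈ SpSet g (ZMod 4) ↔
      Xᵀ * OmegaMat g (ZMod 2) + OmegaMat g (ZMod 2) * X = 0 := by
  rw [SpSet, Set.mem_ofPred_eq, transpose_oneAddDouble_mul_OmegaMat_mul, add_eq_left,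
    map_eq_zero_iff _ double_injective]

lemma oneAddDouble_mem_GSpSet {X : Matrix (Fin (2 * g)) (Fin (2 * g)) (ZMod 2)}
    (hX : Xᵀ * OmegaMat g (ZMod 2) + OmegaMat g (ZMod 2) * X = OmegaMat g (ZMod 2)) :
    oneAddDouble (.ofAdd X) ∈ GSpSet g (ZMod 4) := by
  have three_smul (M : Matrix (Fin (2 * g)) (Fin (2 * g)) (ZMod 4)) : M + (M + M) = -M := by
    have three : ∀ a : ZMod 4, a + (a + a) = -a := by decide
    ext i j
    exact three _
  refine ⟨-1, ?_⟩
  rw [transpose_oneAddDouble_mul_OmegaMat_mul, hX, ← reduction_OmegaMat, double_reduction,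
    three_smul, Units.val_neg, Units.val_one, neg_one_smul]

variable {G : Subgroup (GL (Fin (2 * g)) (ZMod 4))}

lemma infTransvection_mem_levelSubmodule_commutator
    (hker : ∀ x : GL (Fin (2 * g)) (ZMod 4), x ∈ GSpSet g (ZMod 4) → red42 g x = 1 → x ∈ G)
    {w : Fin (2 * g) → ZMod 2} (hw : transvectionGL w ∈ G.map (red42 g)) :
    infTransvection w ∈ levelSubmodule ⁅G, G⁆ := by
  rcases eq_or_ne w 0 with rfl | hw₀
  · rw [infTransvection, vecMulVec_zero, Matrix.zero_mul]
    exact Submodule.zero_mem _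
  obtain ⟨h, hhG, hh⟩ := hw
  obtain ⟨D, hD, hDw⟩ := exists_infinitesimal_similitude hw₀
  have hDG : D ∈ levelSubmodule G :=
    hker _ (oneAddDouble_mem_GSpSet hD) (red42_eq_one_iff.mpr ⟨D, rfl⟩)
  have conj_eq : reduction h.val * D * reduction h⁻¹.val =
      (transvectionGL w).val * D * (transvectionGL w)⁻¹.val := by
    rw [← hh, ← map_inv]
    rfl
  rw [← conj_transvectionGL_sub_self hD hDw, ← conj_eq]
  exact conj_sub_self_mem_levelSubmodule_commutator hhG hDG

end Level

section PermutationRepresentation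

/-- The vector `ē_1 + ⋯ + ē_a` of `(ℤ/2ℤ)^N`. -/
def initialSum (N a : ℕ) : Fin N → ZMod 2 := fun k => if (k : ℕ) < a then 1 else 0

lemma initialSum_dotProduct_initialSum {N a : ℕ} (ha : a ≤ N) (b : ℕ) :
    initialSum N a ⬝ᵥ initialSum N b = (min a b : ℕ) := by
  simp only [initialSum, dotProduct, mul_ite, mul_one, mul_zero, ← ite_and, ← lt_min_iff,
    Finset.sum_boole, Fin.card_filter_val_lt]
  congr 1
  omega

variable {g : ℕ}

lemma col_PsiMat_of_even {j : Fin (2 * g)} (hj : Even (j : ℕ)) :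
    (PsiMat g).col j = initialSum _ (j + 2) := by
  ext k
  exact if_pos (Nat.even_iff.mp hj)

lemma col_PsiMat_of_odd {j : Fin (2 * g)} (hj : Odd (j : ℕ)) :
    (PsiMat g).col j = initialSum _ j + Pi.single ⟨j + 1, by omega⟩ 1 := by
  ext k
  simp only [col_apply, PsiMat, of_apply, Nat.odd_iff.mp hj, one_ne_zero, if_false, initialSum,
    Pi.add_apply, Pi.single_apply, Fin.ext_iff]
  grind

lemma transpose_PsiMat_mul_PsiMat : (PsiMat g)ᵀ * PsiMat g = OmegaMat g (ZMod 2) := by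
  have cast_eq (n : ℕ) : (n : ZMod 2) = if n % 2 = 0 then 0 else 1 := by
    rcases Nat.even_or_odd n with h | h
    · rw [(ZMod.natCast_eq_zero_iff_even).mpr h, if_pos (Nat.even_iff.mp h)]
    · rw [(ZMod.natCast_eq_one_iff_odd).mpr h, if_neg (by rw [Nat.odd_iff.mp h]; simp)]
  ext i j
  change (PsiMat g).col i ⬝ᵥ (PsiMat g).col j = _
  rcases Nat.even_or_odd i with hi | hi <;> rcases Nat.even_or_odd j with hj | hj
  · rw [col_PsiMat_of_even hi, col_PsiMat_of_even hj,
      initialSum_dotProduct_initialSum (by omega), cast_eq]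
    simp only [OmegaMat, of_apply]
    grind
  · rw [col_PsiMat_of_even hi, col_PsiMat_of_odd hj, dotProduct_add, dotProduct_single_one,
      initialSum_dotProduct_initialSum (by omega), cast_eq]
    simp only [OmegaMat, of_apply, initialSum]
    grind
  · rw [col_PsiMat_of_odd hi, col_PsiMat_of_even hj, add_dotProduct, single_one_dotProduct,
      initialSum_dotProduct_initialSum (by omega), cast_eq]
    simp only [OmegaMat, of_apply, initialSum]
    grind
  · rw [col_PsiMat_of_odd hi, col_PsiMat_of_odd hj, add_dotProduct, single_one_dotProduct,
      dotProduct_add, dotProduct_single_one, initialSum_dotProduct_initialSum (by omega), cast_eq]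
    simp only [OmegaMat, of_apply, initialSum, Pi.add_apply, Pi.single_apply, Fin.ext_iff]
    grind

lemma PsiMat_mulVec_injective : Function.Injective (PsiMat g).mulVec := by
  have left_inv : OmegaMat g (ZMod 2) * (PsiMat g)ᵀ * PsiMat g = 1 := by
    rw [Matrix.mul_assoc, transpose_PsiMat_mul_PsiMat, OmegaMat_mul_self, ZModModule.neg_eq_self]
  refine Function.LeftInverse.injective (g := (OmegaMat g (ZMod 2) * (PsiMat g)ᵀ).mulVec) ?_
  intro x
  rw [mulVec_mulVec, left_inv, one_mulVec]

lemma sum_PsiMat_mulVec (x : Fin (2 * g) → ZMod 2) : ∑ k, (PsiMat g *ᵥ x) k = 0 := by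
  have col_sum (j : Fin (2 * g)) : 1 ⬝ᵥ (PsiMat g).col j = 0 := by
    have one_eq : (1 : Fin (2 * g + 2) → ZMod 2) = initialSum _ (2 * g + 2) := by
      ext k
      exact (if_pos k.2).symm
    rcases Nat.even_or_odd j with hj | hj
    · rw [col_PsiMat_of_even hj, one_eq, initialSum_dotProduct_initialSum le_rfl,
        ZMod.natCast_eq_zero_iff_even]
      grind
    · rw [col_PsiMat_of_odd hj, dotProduct_add, dotProduct_single_one, one_eq,
        initialSum_dotProduct_initialSum le_rfl, ← one_eq, Pi.one_apply, ← Nat.cast_succ,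
        ZMod.natCast_eq_zero_iff_even]
      grind
  have vecMul_eq_zero : 1 ᵥ* PsiMat g = 0 := funext col_sum
  rw [← one_dotProduct, dotProduct_mulVec, vecMul_eq_zero, zero_dotProduct]

lemma PsiMat_mulVec_last (x : Fin (2 * g) → ZMod 2) : (PsiMat g *ᵥ x) (Fin.last _) = 0 := by
  have row_last : PsiMat g (Fin.last _) = 0 := by
    ext j
    simp only [PsiMat, of_apply, Fin.val_last, Pi.zero_apply]
    grind
  rw [mulVec, row_last, zero_dotProduct]

lemma exists_PsiMat_mulVec_eq {v : Fin (2 * g + 2) → ZMod 2} (hsum : ∑ k, v k = 0)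
    (hlast : v (Fin.last _) = 0) : ∃ x, PsiMat g *ᵥ x = v := by
  let Φ : (Fin (2 * g + 2) → ZMod 2) →ₗ[ZMod 2] ZMod 2 × ZMod 2 :=
    (∑ k, LinearMap.proj k).prod (LinearMap.proj (Fin.last _))
  have mem_ker {v} : v ∈ LinearMap.ker Φ ↔ ∑ k, v k = 0 ∧ v (Fin.last _) = 0 := by
    simp [Φ]
  have hΦ : Function.Surjective Φ := by
    rintro ⟨a, b⟩
    refine ⟨Pi.single 0 (a - b) + Pi.single (Fin.last _) b, ?_⟩
    simp [Φ, Finset.sum_add_distrib]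
  have range_le : LinearMap.range (PsiMat g).mulVecLin ≤ LinearMap.ker Φ := by
    rintro _ ⟨x, rfl⟩
    exact mem_ker.mpr ⟨sum_PsiMat_mulVec x, PsiMat_mulVec_last x⟩
  have range_eq : LinearMap.range (PsiMat g).mulVecLin = LinearMap.ker Φ := by
    apply Submodule.eq_of_le_of_finrank_eq range_le
    have rank_nullity := Φ.finrank_range_add_finrank_ker
    rw [LinearMap.range_eq_top.mpr hΦ, finrank_top, Module.finrank_prod, Module.finrank_self,
      Module.finrank_fin_fun] at rank_nullity
    rw [LinearMap.finrank_range_of_inj PsiMat_mulVec_injective, Module.finrank_fin_fun]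
    omega
  exact range_eq.ge (mem_ker.mpr ⟨hsum, hlast⟩)

lemma permMat_swap (a b : Fin (2 * g + 2)) :
    permMat g (Equiv.swap a b) =
      1 + vecMulVec (Pi.single a 1 + Pi.single b 1) (Pi.single a 1 + Pi.single b 1) := by
  ext k j
  simp only [permMat, of_apply, Matrix.add_apply, one_apply, vecMulVec_apply,
    Pi.add_apply, Pi.single_apply, Equiv.swap_apply_def]
  split_ifs <;> first | omega | decide

lemma representsPerm_transvectionGL {a b : Fin (2 * g + 2)} {w : Fin (2 * g) → ZMod 2}
    (hw : PsiMat g *ᵥ w = Pi.single a 1 + Pi.single b 1) :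
    representsPerm g (transvectionGL w).val (Equiv.swap a b) := by
  have intertwine : PsiMat g * (1 + infTransvection w) =
      permMat g (Equiv.swap a b) * PsiMat g := by
    rw [permMat_swap, ← hw, infTransvection, ← transpose_PsiMat_mul_PsiMat, Matrix.mul_add,
      Matrix.mul_one, Matrix.add_mul, Matrix.one_mul, ← Matrix.mul_assoc, mul_vecMulVec,
      ← Matrix.mul_assoc, vecMulVec_mul _ w, vecMul_transpose]
  intro j
  change (PsiMat g * (1 + infTransvection w) - permMat g _ * PsiMat g).col j ∈ tline g
  rw [intertwine, sub_self]
  exact (tline g).zero_mem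

/-- The vectors of `M = (ℤ/2ℤ)^{2g}` that `ψ` maps to `ē_1 + ē_k` for some `k ≤ 2g + 1`. -/
def baseEdges (g : ℕ) : Set (Fin (2 * g) → ZMod 2) :=
  {w | ∃ k : Fin (2 * g + 1), PsiMat g *ᵥ w = Pi.single 0 1 + Pi.single k.castSucc 1}

lemma span_baseEdges : Submodule.span (ZMod 2) (baseEdges g) = ⊤ := by
  have exists_edge (k : Fin (2 * g + 1)) :
      ∃ w, PsiMat g *ᵥ w = Pi.single 0 1 + Pi.single k.castSucc 1 := by
    apply exists_PsiMat_mulVec_eq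
    · simp [Finset.sum_add_distrib, ZModModule.add_self]
    · simp [Fin.ext_iff, k.2.ne']
  choose u hu using exists_edge
  refine eq_top_iff.mpr fun x _ => ?_
  have expand : x = ∑ k : Fin (2 * g + 1), (PsiMat g *ᵥ x) k.castSucc • u k := by
    apply PsiMat_mulVec_injective
    have sum_init : ∑ k : Fin (2 * g + 1), (PsiMat g *ᵥ x) k.castSucc = 0 := by
      simpa [Fin.sum_univ_castSucc, PsiMat_mulVec_last] using sum_PsiMat_mulVec x
    conv_lhs => rw [pi_eq_sum_univ' (PsiMat g *ᵥ x)]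
    simp only [mulVec_sum, mulVec_smul, hu, smul_add, Finset.sum_add_distrib, ← Finset.sum_smul,
      sum_init, zero_smul, zero_add]
    rw [Fin.sum_univ_castSucc, PsiMat_mulVec_last, zero_smul, add_zero]
  rw [expand]
  exact Submodule.sum_mem _ fun k _ =>
    Submodule.smul_mem _ _ (Submodule.subset_span ⟨k, hu k⟩)

lemma mul_OmegaMat_mem_of_isSymm
    {A : Submodule (ZMod 2) (Matrix (Fin (2 * g)) (Fin (2 * g)) (ZMod 2))}
    (hA : ∀ (a b : Fin (2 * g + 1)) (w : Fin (2 * g) → ZMod 2),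
      PsiMat g *ᵥ w = Pi.single a.castSucc 1 + Pi.single b.castSucc 1 → infTransvection w ∈ A)
    {S : Matrix (Fin (2 * g)) (Fin (2 * g)) (ZMod 2)} (hS : S.IsSymm) :
    S * OmegaMat g (ZMod 2) ∈ A := by
  refine mem_of_isSymm_of_span_eq_top
    (P := A.comap (LinearMap.mulRight (ZMod 2) (OmegaMat g (ZMod 2)))) span_baseEdges ?_ ?_ hS
  · rintro w ⟨k, hw⟩
    exact hA 0 k w hw
  · rintro w ⟨k, hw⟩ w' ⟨k', hw'⟩
    refine hA k k' (w + w') ?_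
    rw [mulVec_add, hw, hw', add_comm _ (Pi.single k.castSucc 1), ZModModule.add_add_add_cancel]

end PermutationRepresentation

end MaximalMonodromy

open MaximalMonodromy in
theorem maximal_monodromy_stmt10_general (g : ℕ) (G : Subgroup (GL (Fin (2 * g)) (ZMod 4)))
    (hker : ∀ x : GL (Fin (2 * g)) (ZMod 4), x ∈ GSpSet g (ZMod 4) → red42 g x = 1 → x ∈ G)
    (hS : ∀ B : GL (Fin (2 * g)) (ZMod 2),
      (∃ σ : Equiv.Perm (Fin (2 * g + 2)),
        σ (Fin.last (2 * g + 1)) = Fin.last (2 * g + 1) ∧ representsPerm g B.val σ) →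
      B ∈ G.map (red42 g)) :
    ∀ x ∈ SpSet g (ZMod 4), red42 g x = 1 → x ∈ ⁅G, G⁆ := by
  intro x hxSp hx
  obtain ⟨X, rfl⟩ := red42_eq_one_iff.mp hx
  have hX : X * OmegaMat g (ZMod 2) * OmegaMat g (ZMod 2) ∈ levelSubmodule ⁅G, G⁆ := by
    refine mul_OmegaMat_mem_of_isSymm (fun a b w hw => ?_)
      (isSymm_mul_OmegaMat (oneAddDouble_mem_SpSet_iff.mp hxSp))
    have fixes_last : Equiv.swap a.castSucc b.castSucc (Fin.last _) = Fin.last _ :=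
      Equiv.swap_apply_of_ne_of_ne (Fin.castSucc_ne_last a).symm (Fin.castSucc_ne_last b).symm
    exact infTransvection_mem_levelSubmodule_commutator hker
      (hS _ ⟨_, fixes_last, representsPerm_transvectionGL hw⟩)
  rwa [Matrix.mul_assoc, OmegaMat_mul_self, ZModModule.neg_eq_self, Matrix.mul_one] at hX

/-- Let `g ≥ 2` and let `G ⊆ GSp_{2g}(ℤ/4ℤ)` be a subgroup containing the kernel of the
reduction `GSp_{2g}(ℤ/4ℤ) → GSp_{2g}(ℤ/2ℤ)`, whose image in `Sp_{2g}(ℤ/2ℤ)` contains the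
embedded copy of `S_{2g+1}` (the permutations in `S_{2g+2}` fixing the last coordinate,
acting on `W = t^⊥/span(t)`). Then the commutator subgroup `[G,G]` contains the kernel of
the reduction `Sp_{2g}(ℤ/4ℤ) → Sp_{2g}(ℤ/2ℤ)`. -/
theorem maximal_monodromy_stmt10 (g : ℕ) (hg : 2 ≤ g)
    (G : Subgroup (GL (Fin (2*g)) (ZMod 4)))
    (hGSp : (G : Set (GL (Fin (2*g)) (ZMod 4))) ⊆ GSpSet g (ZMod 4))
    (hker : ∀ x : GL (Fin (2*g)) (ZMod 4),
      x ∈ GSpSet g (ZMod 4) → red42 g x = 1 → x ∈ G)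
    (hS : ∀ B : GL (Fin (2*g)) (ZMod 2),
      (∃ σ : Equiv.Perm (Fin (2*g+2)),
        σ ⟨2*g+1, by omega⟩ = (⟨2*g+1, by omega⟩ : Fin (2*g+2)) ∧
        representsPerm g (B : Matrix (Fin (2*g)) (Fin (2*g)) (ZMod 2)) σ) →
      B ∈ Subgroup.map (red42 g) G) :
    ∀ x : GL (Fin (2*g)) (ZMod 4), x ∈ SpSet g (ZMod 4) → red42 g x = 1 →
      x ∈ (⁅G, G⁆ : Subgroup (GL (Fin (2*g)) (ZMod 4))) :=
  maximal_monodromy_stmt10_general g G hker hS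
end

section
/- Let g ∈ {2,3}, and let S̃_{2g+2} ⊆ Sp_{2g}(ℤ_2) denote the full preimage of the embedded copy of S_{2g+2} ⊆ Sp_{2g}(ℤ/2ℤ) under the mod-2 reduction map Sp_{2g}(ℤ_2) → Sp_{2g}(ℤ/2ℤ). If H ⊆ S̃_{2g+2} is a closed subgroup whose mod-2 image equals the full embedded S_{2g+2}, then H = S̃_{2g+2}. -/
open Matrix

/-!
Filter `Γ(2) ∩ Sp(ℤ_2)` by the congruence subgroups; each graded piece is the Lie algebra `𝔰𝔭` over
`𝔽_2`, spanned by the rank-one elements `x ↦ J(v, x) • v`. By successive approximation, a closed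
group `H` contains `Γ(2) ∩ Sp(ℤ_2)` as soon as the leading terms of `H` fill every graded piece.
Squaring carries a rank-one leading term from one piece to the next, so the first piece is enough.

A functional on `𝔰𝔭` killing the leading terms of `H` in the first piece is determined by the
quadratic form it induces on the vectors `v`, and the space `Q` of these forms is stable under the
transvections `T` in the vectors `e i + e j`, which are the transpositions. If `Q ≠ 0`, then either
`Q` contains all squares of linear forms, or it contains a form `q` fixed by one of the `T`, with
value `1` at its vector. Both are impossible, by comparing `T` with a lift `gT ∈ H`, where `g` has
leading term `a`.

* The square of the lift has leading term `a + T a T⁻¹ + (x ↦ J(v, x) • v)`, and evaluating the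
  functional of a fixed form `q` there yields `q v = 0`.
* If `Q` contains all squares, then `J(x, c x) = 0` for every leading term `c`. The same square
  then gives `J(v, a v) = 1` for `v = e i + e j`, whereas commutators with lifts of the
  transvections in `w = e k + e l`, for disjoint pairs, give `J(w, a w) = 0`. The quadratic form
  `x ↦ J(x, a x)` is additive, and `e i + e j` is the sum of the vectors `e k + e l` for a fixed
  `k ∉ {i, j}`, a contradiction.
-/

/-! ### Symplectic transvections and the symplectic Lie algebra -/

lemma mem_span_vecMulVec_self_of_isSymm {I R : Type*} [Finite I] [CommRing R]
    {s : Matrix I I R} (hs : s.IsSymm) :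
    s ∈ Submodule.span R (Set.range fun v : I → R ↦ vecMulVec v v) := by
  classical
  cases nonempty_fintype I
  set U := Submodule.span R (Set.range fun v : I → R ↦ vecMulVec v v)
  let e (i j : I) : Matrix I I R ⧸ U := U.mkQ (single i j 1)
  have mkQ_vecMulVec (v : I → R) : U.mkQ (vecMulVec v v) = 0 :=
    (Submodule.Quotient.mk_eq_zero U).2 (Submodule.subset_span ⟨v, rfl⟩)
  have e_self (i : I) : e i i = 0 := by
    simpa only [e, single_eq_single_vecMulVec_single] using mkQ_vecMulVec _
  have e_add_e (i j : I) : e i j + e j i = 0 := by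
    have h := mkQ_vecMulVec (Pi.single i 1 + Pi.single j 1)
    simp only [add_vecMulVec, vecMulVec_add, ← single_eq_single_vecMulVec_single, map_add] at h
    rwa [show U.mkQ (single i i 1) = 0 from e_self i, show U.mkQ (single j j 1) = 0 from e_self j,
      zero_add, add_zero, add_comm] at h
  have mkQ_eq_sum : U.mkQ s = ∑ x : I × I, s x.1 x.2 • e x.1 x.2 := by
    conv_lhs => rw [matrix_eq_sum_single s]
    simp only [map_sum, Fintype.sum_prod_type, e, ← map_smul, smul_single, smul_eq_mul, mul_one]
  refine (Submodule.Quotient.mk_eq_zero U).1 (mkQ_eq_sum.trans ?_)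
  refine Finset.sum_involution (fun x _ ↦ x.swap) (fun x _ ↦ ?_) (fun x _ hx hswap ↦ hx ?_)
    (fun x _ ↦ Finset.mem_univ _) (fun x _ ↦ x.swap_swap)
  · rw [Prod.fst_swap, Prod.snd_swap, hs.apply, ← smul_add, e_add_e, smul_zero]
  · rw [show x.1 = x.2 from congrArg Prod.snd hswap, e_self, smul_zero]

section FormStabilizer

variable {I R : Type*} [Fintype I] [DecidableEq I] [CommRing R] (J : Matrix I I R)

/-- The group of invertible matrices preserving the bilinear form with matrix `J`. -/
def formStabilizer : Subgroup (GL I R) where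
  carrier := {S | S.valᵀ * J * S.val = J}
  one_mem' := by simp
  mul_mem' {S T} (hS : S.valᵀ * J * S.val = J) (hT : T.valᵀ * J * T.val = J) := by
    change (S * T).valᵀ * J * (S * T).val = J
    rw [Units.val_mul, transpose_mul]
    calc T.valᵀ * S.valᵀ * J * (S.val * T.val)
        = T.valᵀ * (S.valᵀ * J * S.val) * T.val := by simp only [mul_assoc]
      _ = J := by rw [hS, hT]
  inv_mem' {S} (hS : S.valᵀ * J * S.val = J) := by
    calc S⁻¹.valᵀ * J * S⁻¹.val
        = (S.val * S⁻¹.val)ᵀ * J * (S.val * S⁻¹.val) := by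
          conv_lhs => rw [← hS]
          simp only [transpose_mul, mul_assoc]
      _ = J := by rw [S.mul_inv, transpose_one, one_mul, mul_one]

variable {J}

lemma mem_formStabilizer {S : GL I R} :
    S ∈ formStabilizer J ↔ S.valᵀ * J * S.val = J := Iff.rfl

lemma transpose_mul_of_mem_formStabilizer {S : GL I R} (hS : S ∈ formStabilizer J) :
    S.valᵀ * J = J * S⁻¹.val := by
  rw [← mul_one (S.valᵀ * J), ← S.mul_inv, ← mul_assoc, mem_formStabilizer.1 hS]

lemma toBilin'_mulVec_of_mem_formStabilizer {S : GL I R} (hS : S ∈ formStabilizer J)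
    (x y : I → R) :
    toBilin' J (S.val *ᵥ x) y = toBilin' J x (S⁻¹.val *ᵥ y) := by
  rw [toBilin'_apply', toBilin'_apply', mulVec_mulVec,
    ← transpose_mul_of_mem_formStabilizer hS, ← mulVec_mulVec, dotProduct_mulVec x,
    vecMul_transpose]

lemma transpose_eq_neg_of_isAlt (hJ : (toBilin' J).IsAlt) : Jᵀ = -J := by
  ext i j
  simpa using (hJ.neg_eq (Pi.single i 1) (Pi.single j 1)).symm

lemma toBilin'_mulVec_comm_of_mem_skewAdjointMatricesSubmodule (hJ : (toBilin' J).IsAlt)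
    {a : Matrix I I R} (ha : a ∈ skewAdjointMatricesSubmodule J) (x y : I → R) :
    toBilin' J x (a *ᵥ y) = toBilin' J y (a *ᵥ x) := by
  have ha' : aᵀ * J = J * -a := (mem_skewAdjointMatricesSubmodule J a).1 ha
  rw [← hJ.neg_eq (a *ᵥ x) y, toBilin'_apply', toBilin'_apply', ← vecMul_transpose a x,
    ← dotProduct_mulVec, mulVec_mulVec, mulVec_mulVec, ha', mul_neg, neg_mulVec,
    dotProduct_neg, neg_neg]

variable (J)

/-- The quadratic map sending `v` to the matrix of the endomorphism `x ↦ J(v, x) • v`. -/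
def rankOneEnd : QuadraticMap R (I → R) (Matrix I I R) :=
  (LinearMap.mulRight R J).compQuadraticMap (LinearMap.BilinMap.toQuadraticMap (vecMulVecBilin R R))

lemma rankOneEnd_apply (v : I → R) : rankOneEnd J v = vecMulVec v v * J := rfl

variable {J}

lemma rankOneEnd_mulVec (v x : I → R) : rankOneEnd J v *ᵥ x = toBilin' J v x • v := by
  rw [rankOneEnd_apply, ← mulVec_mulVec, vecMulVec_mulVec, op_smul_eq_smul, toBilin'_apply']

lemma rankOneEnd_mul_rankOneEnd {v w : I → R} (h : toBilin' J v w = 0) :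
    rankOneEnd J v * rankOneEnd J w = 0 := by
  rw [toBilin'_apply', dotProduct_mulVec] at h
  rw [rankOneEnd_apply, rankOneEnd_apply, vecMulVec_mul, ← mul_assoc,
    vecMulVec_mul_vecMulVec, h, zero_smul, vecMulVec_zero, zero_mul]

lemma map_rankOneEnd {S : Type*} [CommRing S] (f : R →+* S) (v : I → R) :
    (rankOneEnd J v).map f = rankOneEnd (J.map f) (f ∘ v) := by
  rw [rankOneEnd_apply, rankOneEnd_apply, Matrix.map_mul]
  congr 1
  ext i j
  simp [vecMulVec_apply]

lemma conj_rankOneEnd {S : GL I R} (hS : S ∈ formStabilizer J) (v : I → R) :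
    S.val * rankOneEnd J v * S⁻¹.val = rankOneEnd J (S.val *ᵥ v) := by
  rw [rankOneEnd_apply, rankOneEnd_apply, mul_assoc, mul_assoc,
    ← transpose_mul_of_mem_formStabilizer hS, ← mul_assoc, ← mul_assoc, mul_vecMulVec,
    vecMulVec_mul, vecMul_transpose]

lemma rankOneEnd_mem_skewAdjointMatricesSubmodule (hJ : (toBilin' J).IsAlt) (v : I → R) :
    rankOneEnd J v ∈ skewAdjointMatricesSubmodule J := by
  simp only [mem_skewAdjointMatricesSubmodule, Matrix.IsSkewAdjoint, Matrix.IsAdjointPair,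
    rankOneEnd_apply, transpose_mul, transpose_vecMulVec, transpose_eq_neg_of_isAlt hJ, neg_mul,
    mul_neg, mul_assoc]

lemma skewAdjointMatricesSubmodule_le_span_rankOneEnd (hJ : (toBilin' J).IsAlt)
    (hJu : IsUnit J) :
    skewAdjointMatricesSubmodule J ≤ Submodule.span R (Set.range (rankOneEnd J)) := by
  intro a ha
  have ha' : aᵀ * J = J * -a := (mem_skewAdjointMatricesSubmodule J a).1 ha
  obtain ⟨K, rfl⟩ := hJu
  have hK := transpose_eq_neg_of_isAlt hJ
  set J := K.val
  have hKi : (K⁻¹).valᵀ = -(K⁻¹).val := by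
    have h : (K⁻¹).valᵀ * -J = 1 := by rw [← hK, ← transpose_mul, K.mul_inv, transpose_one]
    rw [← mul_one (K⁻¹).valᵀ, ← K.mul_inv, ← mul_assoc, ← neg_inj, neg_neg, ← neg_mul, ← mul_neg,
      h, one_mul]
  have hsymm : (a * (K⁻¹).val).IsSymm := by
    calc (a * (K⁻¹).val)ᵀ = -(K⁻¹).val * (aᵀ * J) * (K⁻¹).val := by
          rw [transpose_mul, hKi, mul_assoc, mul_assoc aᵀ, K.mul_inv, mul_one]
      _ = a * (K⁻¹).val := by
          rw [ha', ← mul_assoc, neg_mul, K.inv_mul, neg_mul, one_mul, neg_neg]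
  have hmem := Submodule.mem_map_of_mem (f := LinearMap.mulRight R J)
    (mem_span_vecMulVec_self_of_isSymm hsymm)
  rwa [LinearMap.mulRight_apply, mul_assoc, K.inv_mul, mul_one, Submodule.map_span,
    ← Set.range_comp] at hmem

/-- The transvection `x ↦ x + J(v, x) • v` of an alternating form `J`, as a matrix. -/
def symplecticTransvection (hJ : (toBilin' J).IsAlt) (v : I → R) : GL I R where
  val := 1 + rankOneEnd J v
  inv := 1 - rankOneEnd J v
  val_inv := by
    rw [(Commute.one_left _).mul_self_sub_mul_self_eq.symm,
      rankOneEnd_mul_rankOneEnd (hJ.self_eq_zero v), mul_one, sub_zero]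
  inv_val := by
    rw [(Commute.one_left _).mul_self_sub_mul_self_eq'.symm,
      rankOneEnd_mul_rankOneEnd (hJ.self_eq_zero v), mul_one, sub_zero]

lemma coe_symplecticTransvection (hJ : (toBilin' J).IsAlt) (v : I → R) :
    (symplecticTransvection hJ v).val = 1 + rankOneEnd J v := rfl

lemma symplecticTransvection_mulVec (hJ : (toBilin' J).IsAlt) (v x : I → R) :
    (symplecticTransvection hJ v).val *ᵥ x = LinearMap.transvection (toBilin' J v) v x := by
  rw [coe_symplecticTransvection, add_mulVec, one_mulVec, rankOneEnd_mulVec,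
    LinearMap.transvection.apply]

lemma symplecticTransvection_mem_formStabilizer (hJ : (toBilin' J).IsAlt) (v : I → R) :
    symplecticTransvection hJ v ∈ formStabilizer J := by
  have hN : (rankOneEnd J v)ᵀ * J = J * -rankOneEnd J v :=
    (mem_skewAdjointMatricesSubmodule J _).1 (rankOneEnd_mem_skewAdjointMatricesSubmodule hJ v)
  have hT := (symplecticTransvection hJ v).inv_mul
  rw [mem_formStabilizer, coe_symplecticTransvection, transpose_add, transpose_one, add_mul,
    one_mul, hN]
  calc (J + J * -rankOneEnd J v) * (1 + rankOneEnd J v)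
      = J * ((1 - rankOneEnd J v) * (1 + rankOneEnd J v)) := by noncomm_ring
    _ = J := by rw [← coe_symplecticTransvection hJ]; exact (congrArg (J * ·) hT).trans (mul_one J)

lemma commute_symplecticTransvection (hJ : (toBilin' J).IsAlt) {v w : I → R}
    (h : toBilin' J v w = 0) :
    Commute (symplecticTransvection hJ v) (symplecticTransvection hJ w) := by
  have h' : toBilin' J w v = 0 := by rw [← hJ.neg_eq, h, neg_zero]
  refine Units.ext ?_
  simp only [Units.val_mul, coe_symplecticTransvection, mul_add, add_mul, mul_one, one_mul,
    rankOneEnd_mul_rankOneEnd h, rankOneEnd_mul_rankOneEnd h', add_zero]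
  abel

lemma map_symplecticTransvection {S : Type*} [CommRing S] (f : R →+* S)
    (hJ : (toBilin' J).IsAlt) (hJf : (toBilin' (J.map f)).IsAlt) (v : I → R) :
    GeneralLinearGroup.map f (symplecticTransvection hJ v)
      = symplecticTransvection hJf (f ∘ v) := by
  refine Units.ext ?_
  change (1 + rankOneEnd J v).map f = 1 + rankOneEnd (J.map f) (f ∘ v)
  rw [Matrix.map_add f (map_add f), Matrix.map_one f (map_zero f) (map_one f), map_rankOneEnd]

end FormStabilizer

/-! ### The congruence filtration -/

section LeadingTerm

variable {p : ℕ} [Fact p.Prime]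

lemma map_toZMod_pow_succ_smul {m n : Type*} (k : ℕ) (A : Matrix m n ℤ_[p]) :
    ((p : ℤ_[p]) ^ (k + 1) • A).map PadicInt.toZMod = 0 := by
  ext i j
  simp

lemma exists_eq_p_smul_of_map_toZMod_eq_zero {m n : Type*} {A : Matrix m n ℤ_[p]}
    (hA : A.map PadicInt.toZMod = 0) : ∃ B : Matrix m n ℤ_[p], A = (p : ℤ_[p]) • B := by
  have hdvd (i : m) (j : n) : (p : ℤ_[p]) ∣ A i j := by
    rw [← Ideal.mem_span_singleton, ← PadicInt.maximalIdeal_eq_span_p, ← PadicInt.ker_toZMod]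
    exact congrFun₂ hA i j
  choose B hB using hdvd
  exact ⟨of B, ext hB⟩

variable {I : Type*} [Fintype I] [DecidableEq I]

/-- The leading term of `x` in the `k`-th step of the congruence filtration of `GL(ℤ_p)`:
`x = 1 + p ^ (k + 1) A` with `A` reducing to `a` modulo `p`. -/
def IsLeadingTerm (k : ℕ) (x : GL I ℤ_[p]) (a : Matrix I I (ZMod p)) : Prop :=
  ∃ A : Matrix I I ℤ_[p], x.val = 1 + (p : ℤ_[p]) ^ (k + 1) • A ∧ A.map PadicInt.toZMod = a

lemma exists_isLeadingTerm_zero {x : GL I ℤ_[p]}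
    (hx : GeneralLinearGroup.map PadicInt.toZMod x = 1) : ∃ a, IsLeadingTerm 0 x a := by
  have hx' : x.val.map PadicInt.toZMod = 1 := congrArg Units.val hx
  obtain ⟨A, hA⟩ := exists_eq_p_smul_of_map_toZMod_eq_zero (A := x.val - 1) (by
    rw [← RingHom.mapMatrix_apply, map_sub, map_one, RingHom.mapMatrix_apply, hx', sub_self])
  exact ⟨_, A, by rw [zero_add, pow_one, ← hA, add_sub_cancel], rfl⟩

namespace IsLeadingTerm

variable {k : ℕ} {x y : GL I ℤ_[p]} {a b : Matrix I I (ZMod p)}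

lemma one : IsLeadingTerm k (1 : GL I ℤ_[p]) 0 := ⟨0, by simp, by simp⟩

lemma mul (hx : IsLeadingTerm k x a) (hy : IsLeadingTerm k y b) :
    IsLeadingTerm k (x * y) (a + b) := by
  obtain ⟨A, hA, rfl⟩ := hx
  obtain ⟨B, hB, rfl⟩ := hy
  refine ⟨A + B + (p : ℤ_[p]) ^ (k + 1) • (A * B), ?_, ?_⟩
  · rw [Units.val_mul, hA, hB]
    simp only [mul_add, add_mul, smul_mul_assoc, mul_smul_comm, mul_one, one_mul, smul_add]
    abel
  · rw [Matrix.map_add _ (map_add _), Matrix.map_add _ (map_add _), map_toZMod_pow_succ_smul,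
      add_zero]

lemma inv (hx : IsLeadingTerm k x a) : IsLeadingTerm k x⁻¹ (-a) := by
  obtain ⟨A, hA, rfl⟩ := hx
  have hinv : x⁻¹.val = 1 - (p : ℤ_[p]) ^ (k + 1) • (x⁻¹.val * A) := by
    rw [eq_sub_iff_add_eq, ← mul_smul_comm]
    nth_rw 1 [← mul_one x⁻¹.val]
    rw [← mul_add, ← hA, x.inv_mul]
  refine ⟨-(x⁻¹.val * A), by rw [smul_neg, ← sub_eq_add_neg]; exact hinv, ?_⟩
  rw [Matrix.map_neg _ (map_neg _), hinv, sub_mul, one_mul, smul_mul_assoc,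
    Matrix.map_sub _ (map_sub _), map_toZMod_pow_succ_smul, sub_zero]

lemma conj (y : GL I ℤ_[p]) (hx : IsLeadingTerm k x a) :
    IsLeadingTerm k (y * x * y⁻¹) ((GeneralLinearGroup.map PadicInt.toZMod y).val * a *
      (GeneralLinearGroup.map PadicInt.toZMod y)⁻¹.val) := by
  obtain ⟨A, hA, rfl⟩ := hx
  refine ⟨y.val * A * y⁻¹.val, ?_, ?_⟩
  · rw [Units.val_mul, Units.val_mul, hA, mul_add, add_mul, mul_one, y.mul_inv, mul_smul_comm,
      smul_mul_assoc]
  · rw [Matrix.map_mul, Matrix.map_mul]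
    rfl

lemma succ (hx : IsLeadingTerm k x 0) : ∃ b, IsLeadingTerm (k + 1) x b := by
  obtain ⟨A, hA, hA0⟩ := hx
  obtain ⟨B, rfl⟩ := exists_eq_p_smul_of_map_toZMod_eq_zero hA0
  exact ⟨_, B, by rw [hA, smul_smul, ← pow_succ], rfl⟩

lemma mem_skewAdjointMatricesSubmodule {O : Matrix I I ℤ_[p]} (hx : IsLeadingTerm k x a)
    (hxO : x ∈ formStabilizer O) :
    a ∈ skewAdjointMatricesSubmodule (O.map PadicInt.toZMod) := by
  obtain ⟨A, hA, rfl⟩ := hx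
  have hsum : Aᵀ * O + O * A + (p : ℤ_[p]) ^ (k + 1) • (Aᵀ * O * A) = 0 := by
    refine smul_right_injective _ (pow_ne_zero (k + 1) (PadicInt.prime_p (p := p)).ne_zero) ?_
    rw [mem_formStabilizer, hA, transpose_add, transpose_one, transpose_smul] at hxO
    simp only [mul_add, add_mul, smul_mul_assoc, mul_smul_comm, mul_one, one_mul, smul_add,
      smul_zero, mul_assoc] at hxO ⊢
    rw [← sub_eq_zero.2 hxO]
    abel
  have hmod := congrArg (fun M : Matrix I I ℤ_[p] ↦ M.map PadicInt.toZMod) hsum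
  simp only [Matrix.map_add _ (map_add _), Matrix.map_mul, map_toZMod_pow_succ_smul, add_zero,
    Matrix.map_zero _ (map_zero _)] at hmod
  rw [_root_.mem_skewAdjointMatricesSubmodule, Matrix.IsSkewAdjoint, Matrix.IsAdjointPair,
    mul_neg]
  exact eq_neg_of_add_eq_zero_left hmod

lemma sq {x : GL I ℤ_[2]} {a : Matrix I I (ZMod 2)} (hx : IsLeadingTerm k x a)
    (ha : a * a = 0) : IsLeadingTerm (k + 1) (x * x) a := by
  obtain ⟨A, hA, rfl⟩ := hx
  refine ⟨A + (2 : ℤ_[2]) ^ k • (A * A), ?_, ?_⟩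
  · rw [Units.val_mul, hA]
    simp only [mul_add, add_mul, smul_mul_assoc, mul_smul_comm, mul_one, one_mul, smul_add,
      smul_smul, Nat.cast_ofNat]
    module
  · ext i j
    have haij : (A * A).map PadicInt.toZMod i j = 0 := by rw [Matrix.map_mul, ha]; rfl
    rw [map_apply] at haij
    simp [haij]

end IsLeadingTerm

lemma isLeadingTerm_symplecticTransvection_sq {O : Matrix I I ℤ_[2]} (hO : (toBilin' O).IsAlt)
    (v : I → ℤ_[2]) :
    IsLeadingTerm 0 (symplecticTransvection hO v * symplecticTransvection hO v)
      (rankOneEnd (O.map PadicInt.toZMod) (PadicInt.toZMod ∘ v)) := by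
  refine ⟨rankOneEnd O v, ?_, map_rankOneEnd _ _⟩
  rw [Units.val_mul, coe_symplecticTransvection, mul_add, mul_one, add_mul, one_mul,
    rankOneEnd_mul_rankOneEnd (hO.self_eq_zero v), Nat.cast_ofNat]
  module

lemma tendsto_one_of_isLeadingTerm {z : ℕ → GL I ℤ_[p]} {a : ℕ → Matrix I I (ZMod p)}
    (hz : ∀ k, IsLeadingTerm k (z k) (a k)) :
    Filter.Tendsto z Filter.atTop (nhds 1) := by
  have tendsto_val {w : ℕ → GL I ℤ_[p]} {b : ℕ → Matrix I I (ZMod p)}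
      (hw : ∀ k, IsLeadingTerm k (w k) (b k)) :
      Filter.Tendsto (fun k ↦ (w k).val) Filter.atTop (nhds 1) := by
    choose A hA _ using hw
    rw [← add_zero (1 : Matrix I I ℤ_[p]), funext hA]
    refine tendsto_const_nhds.add (tendsto_pi_nhds.2 fun i ↦ tendsto_pi_nhds.2 fun j ↦ ?_)
    have hp : Filter.Tendsto (fun k ↦ ((p : ℝ)⁻¹) ^ (k + 1)) Filter.atTop (nhds 0) :=
      (tendsto_pow_atTop_nhds_zero_of_lt_one (by positivity) (inv_lt_one_of_one_lt₀
        (mod_cast (Fact.out : p.Prime).one_lt))).comp (Filter.tendsto_add_atTop_nat 1)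
    refine squeeze_zero_norm (fun k ↦ ?_) hp
    rw [Matrix.smul_apply, smul_eq_mul, norm_mul, norm_pow, PadicInt.norm_p]
    exact mul_le_of_le_one_right (by positivity) (PadicInt.norm_le_one _)
  rw [Units.isInducing_embedProduct.tendsto_nhds_iff]
  refine (tendsto_val hz).prodMk_nhds ?_
  exact (MulOpposite.continuous_op.tendsto 1).comp (tendsto_val fun k ↦ (hz k).inv)

/-- The leading terms of the elements of `H` in the `k`-th step of the congruence filtration. -/
def layer (H : Subgroup (GL I ℤ_[p])) (k : ℕ) : Submodule (ZMod p) (Matrix I I (ZMod p)) :=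
  AddSubgroup.toZModSubmodule p
    { carrier := {a | ∃ h ∈ H, IsLeadingTerm k h a}
      zero_mem' := ⟨1, H.one_mem, .one⟩
      add_mem' := fun ⟨_, hxH, hx⟩ ⟨_, hyH, hy⟩ ↦ ⟨_, H.mul_mem hxH hyH, hx.mul hy⟩
      neg_mem' := fun ⟨_, hxH, hx⟩ ↦ ⟨_, H.inv_mem hxH, hx.inv⟩ }

variable {H : Subgroup (GL I ℤ_[p])} {O : Matrix I I ℤ_[p]}

lemma layer_le_skewAdjointMatricesSubmodule (hHO : H ≤ formStabilizer O) (k : ℕ) :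
    layer H k ≤ skewAdjointMatricesSubmodule (O.map PadicInt.toZMod) :=
  fun _ ⟨_, hh, ha⟩ ↦ ha.mem_skewAdjointMatricesSubmodule (hHO hh)

lemma conj_mem_layer {h : GL I ℤ_[p]} (hh : h ∈ H) {k : ℕ} {a : Matrix I I (ZMod p)}
    (ha : a ∈ layer H k) :
    (GeneralLinearGroup.map PadicInt.toZMod h).val * a *
      (GeneralLinearGroup.map PadicInt.toZMod h)⁻¹.val ∈ layer H k := by
  obtain ⟨x, hx, hxa⟩ := ha
  exact ⟨_, H.mul_mem (H.mul_mem hh hx) (H.inv_mem hh), hxa.conj h⟩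

lemma mem_of_isClosed_of_le_layer (hH : IsClosed (H : Set (GL I ℤ_[p])))
    (hHO : H ≤ formStabilizer O)
    (hlayer : ∀ k, skewAdjointMatricesSubmodule (O.map PadicInt.toZMod) ≤ layer H k)
    {y : GL I ℤ_[p]} (hyO : y ∈ formStabilizer O)
    (hy : GeneralLinearGroup.map PadicInt.toZMod y = 1) : y ∈ H := by
  have approx (k : ℕ) : ∃ h ∈ H, ∃ a, IsLeadingTerm k (h⁻¹ * y) a := by
    induction k with
    | zero => exact ⟨1, H.one_mem, by simpa using exists_isLeadingTerm_zero hy⟩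
    | succ k ih =>
      obtain ⟨h, hh, a, ha⟩ := ih
      obtain ⟨h', hh', ha'⟩ := hlayer k <| ha.mem_skewAdjointMatricesSubmodule <|
        mul_mem (inv_mem (hHO hh)) hyO
      refine ⟨h * h', H.mul_mem hh hh', ?_⟩
      have h0 := ha'.inv.mul ha
      rw [neg_add_cancel] at h0
      simpa only [_root_.mul_inv_rev, mul_assoc] using h0.succ
  choose h hh a ha using approx
  have hlim : Filter.Tendsto (fun k ↦ y * ((h k)⁻¹ * y)⁻¹) Filter.atTop (nhds y) := by
    simpa using (tendsto_one_of_isLeadingTerm ha).inv.const_mul y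
  refine hH.mem_of_tendsto hlim (Filter.Eventually.of_forall fun k ↦ ?_)
  simpa using hh k

lemma skewAdjointMatricesSubmodule_le_layer {H : Subgroup (GL I ℤ_[2])}
    {J : Matrix I I (ZMod 2)} (hJ : (toBilin' J).IsAlt) (hJu : IsUnit J)
    (h0 : skewAdjointMatricesSubmodule J ≤ layer H 0) (k : ℕ) :
    skewAdjointMatricesSubmodule J ≤ layer H k := by
  induction k with
  | zero => exact h0
  | succ k ih =>
    refine (skewAdjointMatricesSubmodule_le_span_rankOneEnd hJ hJu).trans
      (Submodule.span_le.2 ?_)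
    rintro _ ⟨v, rfl⟩
    obtain ⟨h, hh, hv⟩ := ih (rankOneEnd_mem_skewAdjointMatricesSubmodule hJ v)
    exact ⟨h * h, H.mul_mem hh hh, hv.sq (rankOneEnd_mul_rankOneEnd (hJ.self_eq_zero v))⟩

end LeadingTerm

/-! ### Quadratic forms permuted by transpositions -/

lemma exists_notMem_of_card_lt_card {ι : Type*} [Fintype ι] {s : Finset ι}
    (hs : s.card < Fintype.card ι) : ∃ i, i ∉ s := by
  simpa using Finset.exists_mem_notMem_of_card_lt_card (t := Finset.univ) hs

section Transvection

variable {R W : Type*} [CommRing R] [AddCommGroup W] [Module R W]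

lemma comp_transvection_eq_add_linMulLin (q : QuadraticForm R W) (f : Module.Dual R W) (u : W) :
    q.comp (LinearMap.transvection f u)
      = q + QuadraticMap.linMulLin f (q u • f + q.polarBilin u) := by
  ext x
  simp only [QuadraticMap.comp_apply, LinearMap.transvection.apply, QuadraticMap.map_add q,
    QuadraticMap.map_smul, QuadraticMap.polar_smul_right, QuadraticMap.polar_comm q x u,
    _root_.add_apply, QuadraticMap.linMulLin_apply, LinearMap.add_apply,
    LinearMap.smul_apply, QuadraticMap.polarBilin_apply_apply, smul_eq_mul]
  ring

variable {Q : Submodule R (QuadraticForm R W)} {f g h : Module.Dual R W} {u : W}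

lemma linMulLin_mem_of_comp_transvection_mem
    (hQ : ∀ q ∈ Q, q.comp (LinearMap.transvection f u) ∈ Q) {q : QuadraticForm R W}
    (hq : q ∈ Q) : QuadraticMap.linMulLin f (q u • f + q.polarBilin u) ∈ Q := by
  have hsub := Q.sub_mem (hQ q hq) hq
  rwa [comp_transvection_eq_add_linMulLin, add_sub_cancel_left] at hsub

lemma linMulLin_mem_of_linMulLin_mem (hQ : ∀ q ∈ Q, q.comp (LinearMap.transvection h u) ∈ Q)
    (hfg : QuadraticMap.linMulLin f g ∈ Q) (hf : f u = 0) (hg : g u = 1) :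
    QuadraticMap.linMulLin f h ∈ Q := by
  convert linMulLin_mem_of_comp_transvection_mem hQ hfg using 1
  ext x
  simp only [QuadraticMap.linMulLin_apply, LinearMap.add_apply, LinearMap.smul_apply,
    QuadraticMap.polarBilin_apply_apply, QuadraticMap.polar, map_add, hf, hg, smul_eq_mul]
  ring

lemma linMulLin_self_mem_of_linMulLin_self_mem [CharP R 2]
    (hQ : ∀ q ∈ Q, q.comp (LinearMap.transvection g u) ∈ Q)
    (hf : QuadraticMap.linMulLin f f ∈ Q) (hfu : f u = 1) :
    QuadraticMap.linMulLin g g ∈ Q := by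
  convert linMulLin_mem_of_comp_transvection_mem hQ hf using 1
  ext x
  simp only [QuadraticMap.linMulLin_apply, LinearMap.add_apply, LinearMap.smul_apply,
    QuadraticMap.polarBilin_apply_apply, QuadraticMap.polar, map_add, hfu, smul_eq_mul]
  linear_combination (-(g x * f x)) * CharTwo.two_eq_zero (R := R)

end Transvection

/-- A family of vectors whose sums `d i + d j` behave like the images of `e i + e j` in
`t^⊥ / span t`, where `t = ∑ i, e i` in `(ℤ/2ℤ)^ι`: the transvections along the `d i + d j` then
act like the transpositions of `ι`. Only the sums `d i + d j` are pinned down by this. -/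
structure IsTranspositionFamily {ι W : Type*} [Fintype ι] [DecidableEq ι] [AddCommGroup W]
    [Module (ZMod 2) W] (B : LinearMap.BilinForm (ZMod 2) W) (d : ι → W) : Prop where
  even_card : Even (Fintype.card ι)
  sum_eq_zero : ∑ i, d i = 0
  form_eq_dotProduct (i j k l : ι) : B (d i + d j) (d k + d l)
    = (Pi.single i 1 + Pi.single j 1) ⬝ᵥ (Pi.single k 1 + Pi.single l 1)
  span_eq_top : Submodule.span (ZMod 2) (Set.range fun x : ι × ι ↦ d x.1 + d x.2) = ⊤

namespace IsTranspositionFamily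

variable {ι W : Type*} [Fintype ι] [DecidableEq ι] [AddCommGroup W] [Module (ZMod 2) W]
  {B : LinearMap.BilinForm (ZMod 2) W} {d : ι → W}

lemma form_eq_zero (hd : IsTranspositionFamily B d) {i j k l : ι} (hik : i ≠ k) (hil : i ≠ l)
    (hjk : j ≠ k) (hjl : j ≠ l) : B (d i + d j) (d k + d l) = 0 := by
  rw [hd.form_eq_dotProduct]
  simp [hik, hil, hjk, hjl]

lemma form_eq_one (hd : IsTranspositionFamily B d) {i j k : ι} (hij : i ≠ j) (hik : i ≠ k)
    (hjk : j ≠ k) : B (d i + d j) (d i + d k) = 1 := by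
  rw [hd.form_eq_dotProduct]
  simp [hij, hik, hjk]

lemma form_self (hd : IsTranspositionFamily B d) (i j : ι) :
    B (d i + d j) (d i + d j) = 0 := by
  rw [hd.form_eq_dotProduct]
  simp only [add_dotProduct, single_dotProduct, one_mul, Pi.add_apply, Pi.single_eq_same,
    Pi.single_apply, eq_comm (a := j) (b := i)]
  linear_combination (1 + if i = j then 1 else 0) * CharTwo.two_eq_zero (R := ZMod 2)

lemma sum_erase_erase (hd : IsTranspositionFamily B d) {a b : ι} (hab : a ≠ b) (c : ι) :
    ∑ k ∈ (Finset.univ.erase a).erase b, (d c + d k) = d a + d b := by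
  obtain ⟨n, hn⟩ := hd.even_card
  have hb : b ∈ Finset.univ.erase a := by simp [hab.symm]
  have hcard : ((Finset.univ.erase a).erase b).card = (n - 1) + (n - 1) := by
    rw [Finset.card_erase_of_mem hb, Finset.card_erase_of_mem (Finset.mem_univ a),
      Finset.card_univ, hn]
    omega
  have hrest : ∑ k ∈ (Finset.univ.erase a).erase b, d k + (d a + d b) = 0 := by
    rw [add_comm (d a), ← add_assoc, Finset.sum_erase_add _ _ hb,
      Finset.sum_erase_add _ _ (Finset.mem_univ a), hd.sum_eq_zero]
  rw [Finset.sum_add_distrib, Finset.sum_const, hcard, add_nsmul, ZModModule.add_self, zero_add,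
    eq_neg_of_add_eq_zero_left hrest, ZModModule.neg_eq_self]

lemma span_fixed_eq_top (hd : IsTranspositionFamily B d) (i : ι) :
    Submodule.span (ZMod 2) (Set.range fun j ↦ d i + d j) = ⊤ := by
  rw [eq_top_iff, ← hd.span_eq_top, Submodule.span_le]
  rintro _ ⟨⟨j, k⟩, rfl⟩
  have hjk : d j + d k = (d i + d j) + (d i + d k) := by
    rw [add_add_add_comm, ZModModule.add_self, zero_add]
  change d j + d k ∈ _
  rw [hjk]
  exact Submodule.add_mem _ (Submodule.subset_span ⟨j, rfl⟩) (Submodule.subset_span ⟨k, rfl⟩)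

variable {Q : Submodule (ZMod 2) (QuadraticForm (ZMod 2) W)}

lemma forall_linMulLin_self_mem (hd : IsTranspositionFamily B d)
    (hQ : ∀ i j, ∀ q ∈ Q, q.comp (LinearMap.transvection (B (d i + d j)) (d i + d j)) ∈ Q)
    {a b : ι} (hab : a ≠ b)
    (h : QuadraticMap.linMulLin (B (d a + d b)) (B (d a + d b)) ∈ Q) (w : W) :
    QuadraticMap.linMulLin (B w) (B w) ∈ Q := by
  have hw : w ∈ Submodule.span (ZMod 2) (Set.range fun k ↦ d a + d k) := by
    rw [hd.span_fixed_eq_top]; trivial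
  have linMulLin_zero : QuadraticMap.linMulLin (B 0) (B 0) = 0 := by ext; simp
  induction hw using Submodule.span_induction with
  | mem _ hx =>
    obtain ⟨k, rfl⟩ := hx
    rcases eq_or_ne k a with rfl | hka
    · simpa only [ZModModule.add_self, linMulLin_zero] using Q.zero_mem
    rcases eq_or_ne k b with rfl | hkb
    · exact h
    exact linMulLin_self_mem_of_linMulLin_self_mem (hQ a k) h
      (hd.form_eq_one hab hka.symm hkb.symm)
  | zero => exact linMulLin_zero ▸ Q.zero_mem
  | add x y _ _ hx hy =>
    convert Q.add_mem hx hy using 1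
    ext z
    simp only [map_add, QuadraticMap.linMulLin_apply, LinearMap.add_apply,
      _root_.add_apply]
    linear_combination (B x z * B y z) * CharTwo.two_eq_zero (R := ZMod 2)
  | smul c x _ hx =>
    convert Q.smul_mem (c * c) hx using 1
    ext z
    simp only [map_smul, QuadraticMap.linMulLin_apply, LinearMap.smul_apply,
      _root_.smul_apply, smul_eq_mul]
    ring

lemma linMulLin_self_mem_of_polar_eq_one (hd : IsTranspositionFamily B d)
    (hQ : ∀ i j, ∀ q ∈ Q, q.comp (LinearMap.transvection (B (d i + d j)) (d i + d j)) ∈ Q)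
    {q : QuadraticForm (ZMod 2) W} (hq : q ∈ Q) {a b c e : ι} (hab : a ≠ b) (hac : a ≠ c)
    (hae : a ≠ e) (hbc : b ≠ c) (hbe : b ≠ e)
    (hpolar : QuadraticMap.polar q (d a + d b) (d c + d e) = 1) :
    QuadraticMap.linMulLin (B (d a + d b)) (B (d a + d b)) ∈ Q := by
  have hce : c ≠ e := by
    rintro rfl
    simp [ZModModule.add_self] at hpolar
  have mem_ce : QuadraticMap.linMulLin (B (d a + d b)) (B (d c + d e)) ∈ Q := by
    refine linMulLin_mem_of_linMulLin_mem (hQ c e)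
      (linMulLin_mem_of_comp_transvection_mem (hQ a b) hq) (hd.form_eq_zero hac hae hbc hbe) ?_
    rw [LinearMap.add_apply, LinearMap.smul_apply, hd.form_eq_zero hac hae hbc hbe, smul_zero,
      zero_add, QuadraticMap.polarBilin_apply_apply, hpolar]
  have mem_ck (k : ι) (hk : k ∈ (Finset.univ.erase a).erase b) :
      QuadraticMap.linMulLin (B (d a + d b)) (B (d c + d k)) ∈ Q := by
    simp only [Finset.mem_erase, Finset.mem_univ, and_true] at hk
    rcases eq_or_ne k c with rfl | hkc
    · convert Q.zero_mem
      ext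
      simp [ZModModule.add_self]
    rcases eq_or_ne k e with rfl | hke
    · exact mem_ce
    exact linMulLin_mem_of_linMulLin_mem (hQ c k) mem_ce
      (hd.form_eq_zero hac hk.2.symm hbc hk.1.symm) (hd.form_eq_one hce hkc.symm hke.symm)
  convert Q.sum_mem mem_ck using 1
  ext x
  rw [← hd.sum_erase_erase hab c]
  simp only [QuadraticMap.linMulLin_apply, _root_.sum_apply, map_sum, LinearMap.sum_apply,
    Finset.mul_sum]

lemma exists_polarBilin_eq_smul (hd : IsTranspositionFamily B d) (hcard : 2 < Fintype.card ι)
    {q : QuadraticForm (ZMod 2) W}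
    (hq : ∀ a b c e, a ≠ b → a ≠ c → a ≠ e → b ≠ c → b ≠ e →
      QuadraticMap.polar q (d a + d b) (d c + d e) = 0) {i j : ι} (hij : i ≠ j) :
    ∃ c : ZMod 2, q.polarBilin (d i + d j) = c • B (d i + d j) := by
  obtain ⟨k, hki, hkj⟩ : ∃ k, k ≠ i ∧ k ≠ j := by
    simpa using exists_notMem_of_card_lt_card (s := {i, j}) (Finset.card_le_two.trans_lt hcard)
  refine ⟨q.polarBilin (d i + d j) (d i + d k), ?_⟩
  refine LinearMap.ext_on_range (hd.span_fixed_eq_top i) fun l ↦ ?_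
  rw [LinearMap.smul_apply, smul_eq_mul]
  rcases eq_or_ne l i with rfl | hli
  · simp [ZModModule.add_self]
  rcases eq_or_ne l j with rfl | hlj
  · rw [hd.form_self, mul_zero, QuadraticMap.polarBilin_apply_apply, QuadraticMap.polar_self,
      two_nsmul, ZModModule.add_self]
  rw [hd.form_eq_one hij hli.symm hlj.symm, mul_one]
  have hil : d i + d l = (d i + d k) + (d k + d l) := by
    rw [add_assoc, ← add_assoc (d k), ZModModule.add_self, zero_add]
  rw [hil, map_add, QuadraticMap.polarBilin_apply_apply _ _ (d k + d l),
    hq i j k l hij hki.symm hli.symm hkj.symm hlj.symm, add_zero]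

lemma eq_zero_of_polarBilin_eq_zero (hd : IsTranspositionFamily B d)
    {q : QuadraticForm (ZMod 2) W} (hq : ∀ i j, q (d i + d j) = 0)
    (hpolar : ∀ i j, q.polarBilin (d i + d j) = 0) : q = 0 := by
  have hpolar' (x : W) : q.polarBilin x = 0 := by
    have h : q.polarBilin = 0 :=
      LinearMap.ext_on_range hd.span_eq_top fun x ↦ hpolar x.1 x.2
    rw [h, LinearMap.zero_apply]
  ext x
  have hx : x ∈ Submodule.span (ZMod 2) (Set.range fun x : ι × ι ↦ d x.1 + d x.2) := by
    rw [hd.span_eq_top]; trivial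
  induction hx using Submodule.span_induction with
  | mem _ hx => obtain ⟨⟨i, j⟩, rfl⟩ := hx; exact hq i j
  | zero => exact map_zero _
  | add x y _ _ hx hy =>
    rw [QuadraticMap.map_add q, ← QuadraticMap.polarBilin_apply_apply, hpolar', hx, hy]
    simp
  | smul c x _ hx => rw [QuadraticMap.map_smul, hx]; simp

theorem forall_linMulLin_self_mem_or_exists_comp_eq_self (hd : IsTranspositionFamily B d)
    (hcard : 2 < Fintype.card ι)
    (hQ : ∀ i j, ∀ q ∈ Q, q.comp (LinearMap.transvection (B (d i + d j)) (d i + d j)) ∈ Q)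
    {q : QuadraticForm (ZMod 2) W} (hq : q ∈ Q) (hq0 : q ≠ 0) :
    (∀ w, QuadraticMap.linMulLin (B w) (B w) ∈ Q) ∨
      ∃ i j, q.comp (LinearMap.transvection (B (d i + d j)) (d i + d j)) = q ∧
        q (d i + d j) = 1 := by
  by_contra! ⟨⟨w, hw⟩, hfix⟩
  have no_square {i j : ι} (hij : i ≠ j) :
      QuadraticMap.linMulLin (B (d i + d j)) (B (d i + d j)) ∉ Q :=
    fun h ↦ hw (hd.forall_linMulLin_self_mem hQ hij h w)
  have hpolar (i j : ι) (hij : i ≠ j) :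
      q.polarBilin (d i + d j) = q (d i + d j) • B (d i + d j) := by
    obtain ⟨c, hc⟩ := hd.exists_polarBilin_eq_smul hcard (q := q) (fun a b c e hab hac hae hbc hbe ↦
      of_not_not fun h ↦ no_square hab <| hd.linMulLin_self_mem_of_polar_eq_one hQ hq hab hac hae
        hbc hbe (Fin.eq_one_of_ne_zero _ h)) hij
    have hmem := linMulLin_mem_of_comp_transvection_mem (hQ i j) hq
    rw [hc, ← add_smul] at hmem
    rcases eq_or_ne (q (d i + d j) + c) 0 with hzero | hone
    · rw [hc, eq_neg_of_add_eq_zero_left hzero, ZModModule.neg_eq_self]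
    · have hone : q (d i + d j) + c = 1 := Fin.eq_one_of_ne_zero _ hone
      rw [hone, one_smul] at hmem
      exact (no_square hij hmem).elim
  have hpolar' (i j : ι) : q.polarBilin (d i + d j) = q (d i + d j) • B (d i + d j) := by
    rcases eq_or_ne i j with rfl | hij
    · simp [ZModModule.add_self]
    · exact hpolar i j hij
  have hvalue (i j : ι) : q (d i + d j) = 0 := by
    by_contra h
    refine hfix i j ?_ (Fin.eq_one_of_ne_zero _ h)
    rw [comp_transvection_eq_add_linMulLin, hpolar', ← add_smul, ZModModule.add_self, zero_smul]
    ext x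
    simp
  exact hq0 <| hd.eq_zero_of_polarBilin_eq_zero hvalue fun i j ↦ by
    rw [hpolar', hvalue, zero_smul]

end IsTranspositionFamily

/-! ### The first layer -/

section MapForm

variable {I R S : Type*} [Fintype I] [DecidableEq I] [CommRing R] [CommRing S]

lemma toBilin'_map_comp (f : R →+* S) (J : Matrix I I R) (x y : I → R) :
    toBilin' (J.map f) (f ∘ x) (f ∘ y) = f (toBilin' J x y) := by
  simp [toBilin'_apply]

lemma isAlt_toBilin'_map {f : R →+* S} (hf : Function.Surjective f) {J : Matrix I I R}
    (hJ : (toBilin' J).IsAlt) : (toBilin' (J.map f)).IsAlt := by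
  intro x
  obtain ⟨y, rfl⟩ := hf.comp_left x
  rw [toBilin'_map_comp, hJ.self_eq_zero, map_zero]

end MapForm

section AnnihilatorForms

variable {I R : Type*} [Fintype I] [DecidableEq I] [CommRing R] {J : Matrix I I R}
  {L : Submodule R (Matrix I I R)}

variable (J L) in
/-- The quadratic forms `v ↦ φ (rankOneEnd J v)` attached to the functionals `φ` vanishing on a
space `L` of matrices. -/
def annihilatorForms : Submodule R (QuadraticForm R (I → R)) where
  carrier := {q | ∃ φ ∈ L.dualAnnihilator, φ.compQuadraticMap (rankOneEnd J) = q}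
  zero_mem' := ⟨0, zero_mem _, rfl⟩
  add_mem' := fun ⟨φ, hφ, hq⟩ ⟨ψ, hψ, hr⟩ ↦ ⟨φ + ψ, add_mem hφ hψ, by rw [← hq, ← hr]; rfl⟩
  smul_mem' := fun c _ ⟨φ, hφ, hq⟩ ↦ ⟨c • φ, Submodule.smul_mem _ c hφ, by rw [← hq]; rfl⟩

lemma comp_mulVecLin_compQuadraticMap_rankOneEnd {S : GL I R} (hS : S ∈ formStabilizer J)
    (φ : Module.Dual R (Matrix I I R)) :
    (φ.compQuadraticMap (rankOneEnd J)).comp S.val.mulVecLin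
      = (φ ∘ₗ LinearMap.mulLeftRight R (S.val, S⁻¹.val)).compQuadraticMap (rankOneEnd J) := by
  ext v
  simp [← conj_rankOneEnd hS]

lemma comp_mulVecLin_mem_annihilatorForms {S : GL I R} (hS : S ∈ formStabilizer J)
    (hL : ∀ a ∈ L, S.val * a * S⁻¹.val ∈ L) {q : QuadraticForm R (I → R)}
    (hq : q ∈ annihilatorForms J L) : q.comp S.val.mulVecLin ∈ annihilatorForms J L := by
  obtain ⟨φ, hφ, rfl⟩ := hq
  refine ⟨_, (Submodule.mem_dualAnnihilator _).2 fun a ha ↦ ?_,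
    (comp_mulVecLin_compQuadraticMap_rankOneEnd hS φ).symm⟩
  exact (Submodule.mem_dualAnnihilator φ).1 hφ _ (hL a ha)

lemma eqOn_skewAdjointMatricesSubmodule (hJ : (toBilin' J).IsAlt) (hJu : IsUnit J)
    {φ ψ : Module.Dual R (Matrix I I R)}
    (h : φ.compQuadraticMap (rankOneEnd J) = ψ.compQuadraticMap (rankOneEnd J)) :
    Set.EqOn φ ψ (skewAdjointMatricesSubmodule J) := by
  refine Set.EqOn.mono (skewAdjointMatricesSubmodule_le_span_rankOneEnd hJ hJu)
    (LinearMap.eqOn_span ?_)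
  rintro _ ⟨v, rfl⟩
  exact DFunLike.congr_fun h v

end AnnihilatorForms

section PairSelf

variable {I R : Type*} [Fintype I] [DecidableEq I] [CommRing R] {J : Matrix I I R}

lemma inv_symplecticTransvection_mulVec (hJ : (toBilin' J).IsAlt) (v x : I → R) :
    (symplecticTransvection hJ v)⁻¹.val *ᵥ x = x - toBilin' J v x • v := by
  change (1 - rankOneEnd J v) *ᵥ x = _
  rw [sub_mulVec, one_mulVec, rankOneEnd_mulVec]

lemma toBilin'_conj_mulVec_self {S : GL I R} (hS : S ∈ formStabilizer J) (a : Matrix I I R)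
    (x : I → R) : toBilin' J x ((S.val * a * S⁻¹.val) *ᵥ x)
      = toBilin' J (S⁻¹.val *ᵥ x) (a *ᵥ S⁻¹.val *ᵥ x) := by
  rw [← mulVec_mulVec, ← mulVec_mulVec, toBilin'_mulVec_of_mem_formStabilizer (inv_mem hS),
    inv_inv]

variable [CharP R 2]

lemma toBilin'_mulVec_self_add (hJ : (toBilin' J).IsAlt) {a : Matrix I I R}
    (ha : a ∈ skewAdjointMatricesSubmodule J) (x y : I → R) :
    toBilin' J (x + y) (a *ᵥ (x + y)) = toBilin' J x (a *ᵥ x) + toBilin' J y (a *ᵥ y) := by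
  simp only [mulVec_add, map_add, LinearMap.add_apply,
    toBilin'_mulVec_comm_of_mem_skewAdjointMatricesSubmodule hJ ha y x]
  linear_combination toBilin' J x (a *ᵥ y) * CharTwo.two_eq_zero (R := R)

lemma toBilin'_mulVec_self_eq_zero_of_mem (hJ : (toBilin' J).IsAlt) (hJu : IsUnit J)
    {L : Submodule R (Matrix I I R)} (hL : L ≤ skewAdjointMatricesSubmodule J)
    {x : I → R} (hx : QuadraticMap.linMulLin (toBilin' J x) (toBilin' J x) ∈ annihilatorForms J L)
    {a : Matrix I I R} (ha : a ∈ L) : toBilin' J x (a *ᵥ x) = 0 := by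
  obtain ⟨φ, hφ, hφx⟩ := hx
  let ψ : Module.Dual R (Matrix I I R) := toBilin' J x ∘ₗ (mulVecBilin R R).flip x
  have hψ : ψ.compQuadraticMap (rankOneEnd J) = φ.compQuadraticMap (rankOneEnd J) := by
    rw [hφx]
    ext v
    change toBilin' J x (rankOneEnd J v *ᵥ x) = toBilin' J x v * toBilin' J x v
    rw [rankOneEnd_mulVec, map_smul, smul_eq_mul, ← hJ.neg_eq v x, CharTwo.neg_eq]
  exact (eqOn_skewAdjointMatricesSubmodule hJ hJu hψ (hL ha)).trans
    ((Submodule.mem_dualAnnihilator φ).1 hφ a ha)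

end PairSelf

section Defect

variable {I : Type*} [Fintype I] [DecidableEq I]

lemma exists_lift_orthogonal {p : ℕ} [Fact p.Prime] {O : Matrix I I ℤ_[p]} {u : I → ℤ_[p]}
    {v w : I → ZMod p} (hw : toBilin' (O.map PadicInt.toZMod) (PadicInt.toZMod ∘ u) w ≠ 0)
    (hv : toBilin' (O.map PadicInt.toZMod) (PadicInt.toZMod ∘ u) v = 0) :
    ∃ v' : I → ℤ_[p], PadicInt.toZMod ∘ v' = v ∧ toBilin' O u v' = 0 := by
  have hsurj := (ZMod.ringHom_surjective (PadicInt.toZMod (p := p))).comp_left (α := I)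
  obtain ⟨w, rfl⟩ := hsurj w
  obtain ⟨v, rfl⟩ := hsurj v
  rw [toBilin'_map_comp] at hw hv
  have hunit : IsUnit (toBilin' O u w) := by
    refine IsLocalRing.notMem_maximalIdeal.1 fun h ↦ hw ?_
    rwa [← PadicInt.ker_toZMod] at h
  obtain ⟨c, hc⟩ := hunit.dvd (a := toBilin' O u v)
  refine ⟨v - c • w, ?_, by rw [map_sub, map_smul, hc, smul_eq_mul, mul_comm, sub_self]⟩
  have hc0 : PadicInt.toZMod c = 0 := by
    rw [hc, map_mul] at hv
    exact (mul_eq_zero.1 hv).resolve_left hw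
  ext i
  simp [hc0]

variable {O : Matrix I I ℤ_[2]} {H : Subgroup (GL I ℤ_[2])}

lemma isAlt_toBilin'_map_toZMod (hO : (toBilin' O).IsAlt) :
    (toBilin' (O.map PadicInt.toZMod)).IsAlt :=
  isAlt_toBilin'_map (ZMod.ringHom_surjective _) hO

/-- The first-order defect of an element of `H` lifting a transvection: `H` contains an element
congruent to `(1 + 2a) T` modulo `4`, where `T` is the transvection along `v`. -/
def IsTransvectionDefect (H : Subgroup (GL I ℤ_[2])) (hO : (toBilin' O).IsAlt) (v : I → ℤ_[2])
    (a : Matrix I I (ZMod 2)) : Prop :=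
  ∃ h ∈ H, IsLeadingTerm 0 (h * (symplecticTransvection hO v)⁻¹) a

variable {hO : (toBilin' O).IsAlt} {v w : I → ℤ_[2]} {a b : Matrix I I (ZMod 2)}

lemma exists_isTransvectionDefect (hO : (toBilin' O).IsAlt) {h : GL I ℤ_[2]} (hh : h ∈ H)
    {u : I → ZMod 2} (hu : PadicInt.toZMod ∘ v = u) (hhu : GeneralLinearGroup.map PadicInt.toZMod h
      = symplecticTransvection (isAlt_toBilin'_map_toZMod hO) u) :
    ∃ a, IsTransvectionDefect H hO v a := by
  subst hu
  obtain ⟨a, ha⟩ := exists_isLeadingTerm_zero (x := h * (symplecticTransvection hO v)⁻¹) (by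
    rw [map_mul, map_inv, hhu, map_symplecticTransvection _ hO (isAlt_toBilin'_map_toZMod hO),
      mul_inv_cancel])
  exact ⟨a, h, hh, ha⟩

namespace IsTransvectionDefect

lemma mem_skewAdjointMatricesSubmodule (hHO : H ≤ formStabilizer O)
    (ha : IsTransvectionDefect H hO v a) :
    a ∈ skewAdjointMatricesSubmodule (O.map PadicInt.toZMod) := by
  obtain ⟨h, hh, ha⟩ := ha
  exact ha.mem_skewAdjointMatricesSubmodule
    (mul_mem (hHO hh) (inv_mem (symplecticTransvection_mem_formStabilizer hO v)))

-- With `h = gT`, this is the leading term of `h² = g · (T g T⁻¹) · T²`.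
lemma add_conj_add_rankOneEnd_mem_layer (hv : IsTransvectionDefect H hO v a) :
    let T := symplecticTransvection (isAlt_toBilin'_map_toZMod hO) (PadicInt.toZMod ∘ v)
    a + T.val * a * T⁻¹.val + rankOneEnd (O.map PadicInt.toZMod) (PadicInt.toZMod ∘ v)
      ∈ layer H 0 := by
  obtain ⟨h, hh, hg⟩ := hv
  refine ⟨h * h, H.mul_mem hh hh, ?_⟩
  rw [← map_symplecticTransvection PadicInt.toZMod hO]
  have hlead := (hg.mul (hg.conj (symplecticTransvection hO v))).mul
    (isLeadingTerm_symplecticTransvection_sq hO v)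
  convert hlead using 1
  group

-- With `h = gT` and `k = fU`, this is the leading term of
-- `(hk)(kh)⁻¹ = g · (T f T⁻¹) · (f · (U g U⁻¹))⁻¹`.
lemma add_conj_sub_add_conj_mem_layer (hv : IsTransvectionDefect H hO v a)
    (hw : IsTransvectionDefect H hO w b) (h : toBilin' O v w = 0) :
    let T := symplecticTransvection (isAlt_toBilin'_map_toZMod hO) (PadicInt.toZMod ∘ v)
    let U := symplecticTransvection (isAlt_toBilin'_map_toZMod hO) (PadicInt.toZMod ∘ w)
    a + T.val * b * T⁻¹.val - (b + U.val * a * U⁻¹.val) ∈ layer H 0 := by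
  have hTU := (commute_symplecticTransvection hO h).eq
  obtain ⟨x, hx, hg⟩ := hv
  obtain ⟨y, hy, hf⟩ := hw
  refine ⟨(x * y) * (y * x)⁻¹, H.mul_mem (H.mul_mem hx hy) (H.inv_mem (H.mul_mem hy hx)), ?_⟩
  rw [← map_symplecticTransvection PadicInt.toZMod hO, sub_eq_add_neg,
    ← map_symplecticTransvection PadicInt.toZMod hO]
  have hlead := (hg.mul (hf.conj (symplecticTransvection hO v))).mul
    (hf.mul (hg.conj (symplecticTransvection hO w))).inv
  generalize symplecticTransvection hO v = T at hTU hlead ⊢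
  generalize symplecticTransvection hO w = U at hTU hlead ⊢
  convert hlead using 1
  rw [show x * T⁻¹ * (T * (y * U⁻¹) * T⁻¹) = x * y * (T * U)⁻¹ by group,
    show y * U⁻¹ * (U * (x * T⁻¹) * U⁻¹) = y * x * (U * T)⁻¹ by group, hTU]
  group

lemma map_rankOneEnd_eq_zero (hO' : IsUnit (O.map PadicInt.toZMod)) (hHO : H ≤ formStabilizer O)
    (hv : IsTransvectionDefect H hO v a) {q : QuadraticForm (ZMod 2) (I → ZMod 2)}
    (hq : q ∈ annihilatorForms (O.map PadicInt.toZMod) (layer H 0))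
    (hqv : q.comp (LinearMap.transvection
      (toBilin' (O.map PadicInt.toZMod) (PadicInt.toZMod ∘ v)) (PadicInt.toZMod ∘ v)) = q) :
    q (PadicInt.toZMod ∘ v) = 0 := by
  have hO₂ := isAlt_toBilin'_map_toZMod hO
  obtain ⟨φ, hφ, rfl⟩ := hq
  set T := symplecticTransvection hO₂ (PadicInt.toZMod ∘ v) with hT
  have hTlin : T.val.mulVecLin = LinearMap.transvection
      (toBilin' (O.map PadicInt.toZMod) (PadicInt.toZMod ∘ v)) (PadicInt.toZMod ∘ v) :=
    LinearMap.ext fun x ↦ symplecticTransvection_mulVec hO₂ _ x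
  rw [← hTlin, comp_mulVecLin_compQuadraticMap_rankOneEnd
    (symplecticTransvection_mem_formStabilizer hO₂ _)] at hqv
  have hconj : φ (T.val * a * T⁻¹.val) = φ a :=
    eqOn_skewAdjointMatricesSubmodule hO₂ hO' hqv (hv.mem_skewAdjointMatricesSubmodule hHO)
  have hzero := (Submodule.mem_dualAnnihilator φ).1 hφ _ hv.add_conj_add_rankOneEnd_mem_layer
  rwa [map_add, map_add, ← hT, hconj, ZModModule.add_self, zero_add] at hzero

lemma toBilin'_mulVec_self_eq_one (hH : ∀ c ∈ layer H 0, ∀ x : I → ZMod 2,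
      toBilin' (O.map PadicInt.toZMod) x (c *ᵥ x) = 0) (hHO : H ≤ formStabilizer O)
    (hv : IsTransvectionDefect H hO v a) {x : I → ZMod 2}
    (hx : toBilin' (O.map PadicInt.toZMod) (PadicInt.toZMod ∘ v) x = 1) :
    toBilin' (O.map PadicInt.toZMod) (PadicInt.toZMod ∘ v) (a *ᵥ (PadicInt.toZMod ∘ v)) = 1 := by
  have hO₂ := isAlt_toBilin'_map_toZMod hO
  have hzero := hH _ hv.add_conj_add_rankOneEnd_mem_layer x
  rw [add_mulVec, add_mulVec, map_add, map_add, toBilin'_conj_mulVec_self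
    (symplecticTransvection_mem_formStabilizer hO₂ _), inv_symplecticTransvection_mulVec, hx,
    one_smul, sub_eq_add_neg, ZModModule.neg_eq_self, rankOneEnd_mulVec, hx, one_smul,
    toBilin'_mulVec_self_add hO₂ (hv.mem_skewAdjointMatricesSubmodule hHO), ← add_assoc,
    ZModModule.add_self, zero_add, ← hO₂.neg_eq _ x, hx] at hzero
  rw [eq_neg_of_add_eq_zero_left hzero, neg_neg]

lemma toBilin'_mulVec_self_eq_zero (hH : ∀ c ∈ layer H 0, ∀ x : I → ZMod 2,
      toBilin' (O.map PadicInt.toZMod) x (c *ᵥ x) = 0) (hHO : H ≤ formStabilizer O)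
    (hv : IsTransvectionDefect H hO v a) (hw : IsTransvectionDefect H hO w b)
    (h : toBilin' O v w = 0) {x : I → ZMod 2}
    (hvx : toBilin' (O.map PadicInt.toZMod) (PadicInt.toZMod ∘ v) x = 0)
    (hwx : toBilin' (O.map PadicInt.toZMod) (PadicInt.toZMod ∘ w) x = 1) :
    toBilin' (O.map PadicInt.toZMod) (PadicInt.toZMod ∘ w) (a *ᵥ (PadicInt.toZMod ∘ w)) = 0 := by
  have hO₂ := isAlt_toBilin'_map_toZMod hO
  have hzero := hH _ (hv.add_conj_sub_add_conj_mem_layer hw h) x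
  rw [sub_mulVec, add_mulVec, add_mulVec, map_sub, map_add, map_add, toBilin'_conj_mulVec_self
    (symplecticTransvection_mem_formStabilizer hO₂ _), toBilin'_conj_mulVec_self
    (symplecticTransvection_mem_formStabilizer hO₂ _), inv_symplecticTransvection_mulVec,
    inv_symplecticTransvection_mulVec, hvx, hwx, zero_smul, sub_zero, one_smul, sub_eq_add_neg x,
    ZModModule.neg_eq_self, toBilin'_mulVec_self_add hO₂
    (hv.mem_skewAdjointMatricesSubmodule hHO)] at hzero
  linear_combination -hzero

end IsTransvectionDefect

namespace IsTranspositionFamily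

variable {ι : Type*} [Fintype ι] [DecidableEq ι] {d : ι → I → ZMod 2} (hO)

lemma toBilin'_mulVec_self_eq_zero
    (hd : IsTranspositionFamily (toBilin' (O.map PadicInt.toZMod)) d)
    (hcard : 5 ≤ Fintype.card ι) (hHO : H ≤ formStabilizer O)
    (hH : ∀ i j, ∃ h ∈ H, GeneralLinearGroup.map PadicInt.toZMod h
      = symplecticTransvection (isAlt_toBilin'_map_toZMod hO) (d i + d j))
    (hzero : ∀ e ∈ layer H 0, ∀ x : I → ZMod 2,
      toBilin' (O.map PadicInt.toZMod) x (e *ᵥ x) = 0)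
    {i j k l : ι} (hij : i ≠ j) (hik : i ≠ k) (hil : i ≠ l) (hjk : j ≠ k) (hjl : j ≠ l)
    (hv : PadicInt.toZMod ∘ v = d i + d j) (ha : IsTransvectionDefect H hO v a) :
    toBilin' (O.map PadicInt.toZMod) (d k + d l) (a *ᵥ (d k + d l)) = 0 := by
  rcases eq_or_ne k l with rfl | hkl
  · simp [ZModModule.add_self]
  obtain ⟨m, hm⟩ := exists_notMem_of_card_lt_card (s := {i, j, k, l})
    (Finset.card_le_four.trans_lt hcard)
  simp only [Finset.mem_insert, Finset.mem_singleton, not_or, ← ne_eq] at hm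
  obtain ⟨hmi, hmj, hmk, hml⟩ := hm
  obtain ⟨w, hw, hvw⟩ := exists_lift_orthogonal (O := O) (u := v) (v := d k + d l)
    (w := d i + d k) (by rw [hv, hd.form_eq_one hij hik hjk]; exact one_ne_zero)
    (by rw [hv, hd.form_eq_zero hik hil hjk hjl])
  obtain ⟨h, hh, hhT⟩ := hH k l
  obtain ⟨b, hb⟩ := exists_isTransvectionDefect hO hh hw hhT
  rw [← hw]
  refine ha.toBilin'_mulVec_self_eq_zero hzero hHO hb hvw (x := d k + d m) ?_ ?_
  · rw [hv, hd.form_eq_zero hik hmi.symm hjk hmj.symm]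
  · rw [hw, hd.form_eq_one hkl hmk.symm hml.symm]

lemma exists_toBilin'_mulVec_self_ne_zero
    (hd : IsTranspositionFamily (toBilin' (O.map PadicInt.toZMod)) d)
    (hcard : 5 ≤ Fintype.card ι) (hHO : H ≤ formStabilizer O)
    (hH : ∀ i j, ∃ h ∈ H, GeneralLinearGroup.map PadicInt.toZMod h
      = symplecticTransvection (isAlt_toBilin'_map_toZMod hO) (d i + d j)) :
    ∃ a ∈ layer H 0, ∃ x, toBilin' (O.map PadicInt.toZMod) x (a *ᵥ x) ≠ 0 := by
  by_contra! hzero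
  obtain ⟨i, j, k, hij, hik, hjk⟩ := Fintype.two_lt_card_iff.1 (show 2 < Fintype.card ι by omega)
  obtain ⟨v, hv : PadicInt.toZMod ∘ v = d i + d j⟩ :=
    (ZMod.ringHom_surjective (PadicInt.toZMod (p := 2))).comp_left (d i + d j)
  obtain ⟨h, hh, hhT⟩ := hH i j
  obtain ⟨a, ha⟩ := exists_isTransvectionDefect hO hh hv hhT
  have value_one : toBilin' (O.map PadicInt.toZMod) (d i + d j) (a *ᵥ (d i + d j)) = 1 := by
    rw [← hv]
    exact ha.toBilin'_mulVec_self_eq_one hzero hHO (x := d i + d k)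
      (by rw [hv, hd.form_eq_one hij hik hjk])
  have value_zero : toBilin' (O.map PadicInt.toZMod) (d i + d j) (a *ᵥ (d i + d j)) = 0 := by
    rw [← hd.sum_erase_erase hij k]
    refine Finset.sum_induction _ (fun x ↦ toBilin' (O.map PadicInt.toZMod) x (a *ᵥ x) = 0)
      (fun x y hx hy ↦ ?_) (by simp) fun l hl ↦ ?_
    · rw [toBilin'_mulVec_self_add (isAlt_toBilin'_map_toZMod hO)
        (ha.mem_skewAdjointMatricesSubmodule hHO), hx, hy, add_zero]
    · simp only [Finset.mem_erase, Finset.mem_univ, and_true] at hl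
      exact hd.toBilin'_mulVec_self_eq_zero hO hcard hHO hH hzero hij hik hl.2.symm hjk
        hl.1.symm hv ha
  exact one_ne_zero (value_one.symm.trans value_zero)

theorem skewAdjointMatricesSubmodule_le_layer_zero
    (hd : IsTranspositionFamily (toBilin' (O.map PadicInt.toZMod)) d)
    (hcard : 5 ≤ Fintype.card ι) (hO' : IsUnit (O.map PadicInt.toZMod))
    (hHO : H ≤ formStabilizer O)
    (hH : ∀ i j, ∃ h ∈ H, GeneralLinearGroup.map PadicInt.toZMod h
      = symplecticTransvection (isAlt_toBilin'_map_toZMod hO) (d i + d j)) :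
    skewAdjointMatricesSubmodule (O.map PadicInt.toZMod) ≤ layer H 0 := by
  have hO₂ := isAlt_toBilin'_map_toZMod hO
  set J := O.map PadicInt.toZMod
  set Q := annihilatorForms J (layer H 0)
  have hQ (i j : ι) (q) (hq : q ∈ Q) :
      q.comp (LinearMap.transvection (toBilin' J (d i + d j)) (d i + d j)) ∈ Q := by
    obtain ⟨h, hh, hhT⟩ := hH i j
    convert comp_mulVecLin_mem_annihilatorForms
      (symplecticTransvection_mem_formStabilizer hO₂ (d i + d j))
      (fun a ha ↦ hhT ▸ conj_mem_layer hh ha) hq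
    exact LinearMap.ext fun x ↦ (symplecticTransvection_mulVec hO₂ _ x).symm
  intro x hx
  by_contra hxL
  obtain ⟨φ, hφx, hφ⟩ := Submodule.exists_le_ker_of_notMem hxL
  have hφQ : φ.compQuadraticMap (rankOneEnd J) ∈ Q :=
    ⟨φ, (Submodule.mem_dualAnnihilator φ).2 fun a ha ↦ hφ ha, rfl⟩
  have hφ0 : φ.compQuadraticMap (rankOneEnd J) ≠ 0 := fun h ↦
    hφx (eqOn_skewAdjointMatricesSubmodule hO₂ hO' (ψ := 0) h hx)
  rcases hd.forall_linMulLin_self_mem_or_exists_comp_eq_self (by omega) hQ hφQ hφ0 with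
    hsquares | ⟨i, j, hfix, hij⟩
  · obtain ⟨a, ha, y, hy⟩ := hd.exists_toBilin'_mulVec_self_ne_zero hO hcard hHO hH
    exact hy (toBilin'_mulVec_self_eq_zero_of_mem hO₂ hO'
      (layer_le_skewAdjointMatricesSubmodule hHO 0) (hsquares y) ha)
  · obtain ⟨h, hh, hhT⟩ := hH i j
    obtain ⟨v, hv : PadicInt.toZMod ∘ v = d i + d j⟩ :=
      (ZMod.ringHom_surjective (PadicInt.toZMod (p := 2))).comp_left (d i + d j)
    obtain ⟨a, ha⟩ := exists_isTransvectionDefect hO hh hv hhT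
    rw [← hv] at hfix hij
    exact one_ne_zero (hij.symm.trans (ha.map_rankOneEnd_eq_zero hO' hHO hφQ hfix))

theorem mem_of_isClosed_of_map_mem
    (hd : IsTranspositionFamily (toBilin' (O.map PadicInt.toZMod)) d)
    (hcard : 5 ≤ Fintype.card ι) (hO' : IsUnit (O.map PadicInt.toZMod))
    (hclosed : IsClosed (H : Set (GL I ℤ_[2]))) (hHO : H ≤ formStabilizer O)
    (hH : ∀ i j, ∃ h ∈ H, GeneralLinearGroup.map PadicInt.toZMod h
      = symplecticTransvection (isAlt_toBilin'_map_toZMod hO) (d i + d j))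
    {x : GL I ℤ_[2]} (hxO : x ∈ formStabilizer O)
    (hx : GeneralLinearGroup.map PadicInt.toZMod x
      ∈ H.map (GeneralLinearGroup.map PadicInt.toZMod)) : x ∈ H := by
  obtain ⟨h, hh, hhx⟩ := hx
  refine (H.mul_mem_cancel_left (H.inv_mem hh)).1 <|
    mem_of_isClosed_of_le_layer hclosed hHO (fun k ↦ ?_)
      (mul_mem (inv_mem (hHO hh)) hxO) (by rw [map_mul, map_inv, hhx, inv_mul_cancel])
  exact skewAdjointMatricesSubmodule_le_layer (isAlt_toBilin'_map_toZMod hO) hO'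
    (hd.skewAdjointMatricesSubmodule_le_layer_zero hO hcard hO' hHO hH) k

end IsTranspositionFamily

end Defect

/-! ### The symmetric group in `Sp` -/

section OmegaMat

lemma isAlt_toBilin'_sub_transpose {I R : Type*} [Fintype I] [DecidableEq I] [CommRing R]
    (U : Matrix I I R) : (toBilin' (U - Uᵀ)).IsAlt := by
  intro x
  rw [toBilin'_apply', sub_mulVec, dotProduct_sub, mulVec_transpose, dotProduct_mulVec,
    dotProduct_comm, sub_self]

variable (g : ℕ) (R : Type) [CommRing R]

lemma isAlt_toBilin'_omegaMat : (toBilin' (OmegaMat g R)).IsAlt := by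
  convert isAlt_toBilin'_sub_transpose (of fun i j : Fin (2 * g) ↦
    if (i : ℕ) + 1 = j ∧ (j : ℕ) % 2 = 1 then (1 : R) else 0)
  ext i j
  simp only [OmegaMat, of_apply, Matrix.sub_apply, transpose_apply]
  split_ifs <;> first | omega | simp

lemma omegaMat_mul_self : OmegaMat g R * OmegaMat g R = -1 := by
  ext i j
  rw [mul_apply]
  rcases Nat.even_or_odd' i with ⟨m, hm | hm⟩
  · rw [Finset.sum_eq_single ⟨i + 1, by omega⟩]
    · simp only [OmegaMat, of_apply, Matrix.neg_apply, one_apply, Fin.ext_iff, true_and]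
      split_ifs <;> first | omega | simp
    · intro k _ hk
      simp only [OmegaMat, of_apply, ne_eq, Fin.ext_iff] at hk ⊢
      split_ifs <;> first | omega | simp
    · simp
  · rw [Finset.sum_eq_single ⟨i - 1, by omega⟩]
    · simp only [OmegaMat, of_apply, Matrix.neg_apply, one_apply, Fin.ext_iff]
      split_ifs <;> first | omega | simp
    · intro k _ hk
      simp only [OmegaMat, of_apply, ne_eq, Fin.ext_iff] at hk ⊢
      split_ifs <;> first | omega | simp
    · simp

lemma isUnit_omegaMat : IsUnit (OmegaMat g R) :=
  IsUnit.of_mul_eq_one (-OmegaMat g R) (by rw [mul_neg, omegaMat_mul_self, neg_neg])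

variable {R} in
lemma map_omegaMat {S : Type} [CommRing S] (f : R →+* S) :
    (OmegaMat g R).map f = OmegaMat g S := by
  ext i j
  simp only [OmegaMat, map_apply, of_apply]
  split_ifs <;> simp

end OmegaMat

section InitialVec

/-- The sum `e 0 + ⋯ + e (n - 1)` of the first `n` coordinate vectors of `(ℤ/2ℤ)^N`. -/
def initialVec (N n : ℕ) : Fin N → ZMod 2 := fun k ↦ if k < n then 1 else 0

variable {N : ℕ}

lemma initialVec_dotProduct_initialVec {m : ℕ} (hm : m ≤ N) (n : ℕ) :
    initialVec N m ⬝ᵥ initialVec N n = (min m n : ℕ) := by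
  simp only [dotProduct, initialVec, ← ite_and, mul_ite, mul_one, mul_zero, Finset.sum_boole]
  rw [← Nat.min_eq_right ((min_le_left m n).trans hm), ← Fin.card_filter_val_lt]
  simp only [lt_min_iff, and_comm]

lemma initialVec_succ_dotProduct (k : Fin N) (z : Fin N → ZMod 2) :
    initialVec N (k + 1) ⬝ᵥ z = initialVec N k ⬝ᵥ z + z k := by
  have h : initialVec N (k + 1) = initialVec N k + Pi.single k 1 := by
    ext j
    simp only [initialVec, Pi.add_apply, Pi.single_apply, Fin.ext_iff]
    split_ifs <;> first | omega | simp
  rw [h, add_dotProduct, single_one_dotProduct]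

lemma initialVec_self_dotProduct (z : Fin N → ZMod 2) :
    initialVec N N ⬝ᵥ z = ∑ i, z i := by
  simp [initialVec, dotProduct]

end InitialVec

section PsiMat

variable {g : ℕ}

lemma psiMat_transpose_even {m : ℕ} (hm : m < g) :
    (PsiMat g)ᵀ ⟨2 * m, by omega⟩ = initialVec (2 * g + 2) (2 * m + 2) := by
  ext k
  simp [PsiMat, initialVec]

lemma psiMat_transpose_odd {m : ℕ} (hm : m < g) :
    (PsiMat g)ᵀ ⟨2 * m + 1, by omega⟩ = initialVec (2 * g + 2) (2 * m + 1)
      + initialVec (2 * g + 2) (2 * m + 2) + initialVec (2 * g + 2) (2 * m + 3) := by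
  ext k
  simp only [PsiMat, initialVec, transpose_apply, of_apply, Pi.add_apply]
  split_ifs <;> first | omega | rfl

lemma omegaMat_zmod_two_apply (i j : Fin (2 * g)) :
    OmegaMat g (ZMod 2) i j = (if (i : ℕ) / 2 = j / 2 ∧ i ≠ j then 1 else 0 : ℕ) := by
  simp only [OmegaMat, of_apply, ne_eq, Fin.ext_iff]
  split_ifs <;> first | omega | rfl

lemma psiMat_transpose_mul_self : (PsiMat g)ᵀ * PsiMat g = OmegaMat g (ZMod 2) := by
  ext ⟨a, ha⟩ ⟨b, hb⟩
  change (PsiMat g)ᵀ ⟨a, ha⟩ ⬝ᵥ (PsiMat g)ᵀ ⟨b, hb⟩ = _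
  rw [omegaMat_zmod_two_apply]
  obtain ⟨m, rfl | rfl⟩ := Nat.even_or_odd' a <;> obtain ⟨n, rfl | rfl⟩ := Nat.even_or_odd' b
  all_goals
    simp only [psiMat_transpose_even (g := g) (m := m) (by omega),
      psiMat_transpose_even (g := g) (m := n) (by omega),
      psiMat_transpose_odd (g := g) (m := m) (by omega),
      psiMat_transpose_odd (g := g) (m := n) (by omega), add_dotProduct, dotProduct_add,
      initialVec_dotProduct_initialVec (N := 2 * g + 2) (m := 2 * m + 1) (by omega),
      initialVec_dotProduct_initialVec (N := 2 * g + 2) (m := 2 * m + 2) (by omega),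
      initialVec_dotProduct_initialVec (N := 2 * g + 2) (m := 2 * m + 3) (by omega),
      ← Nat.cast_add, ZMod.natCast_eq_natCast_iff', ne_eq, Fin.mk.injEq]
    split_ifs <;> omega

lemma one_vecMul_psiMat : 1 ᵥ* PsiMat g = 0 := by
  ext ⟨j, hj⟩
  change 1 ⬝ᵥ (PsiMat g)ᵀ _ = 0
  rw [one_dotProduct, ← initialVec_self_dotProduct]
  obtain ⟨m, rfl | rfl⟩ := Nat.even_or_odd' j
  · rw [psiMat_transpose_even (by omega), initialVec_dotProduct_initialVec le_rfl,
      ZMod.natCast_eq_zero_iff]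
    omega
  · simp only [psiMat_transpose_odd (g := g) (m := m) (by omega), dotProduct_add,
      initialVec_dotProduct_initialVec le_rfl, ← Nat.cast_add, ZMod.natCast_eq_zero_iff]
    omega

lemma sum_psiMat_mulVec (x : Fin (2 * g) → ZMod 2) : ∑ k, (PsiMat g *ᵥ x) k = 0 := by
  rw [← one_dotProduct, dotProduct_mulVec, one_vecMul_psiMat, zero_dotProduct]

section Kernel

variable {z : Fin (2 * g + 2) → ZMod 2}

lemma initialVec_even_dotProduct (hz : z ᵥ* PsiMat g = 0) (hsum : ∑ i, z i = 0) {m : ℕ}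
    (hm : m ≤ g + 1) : initialVec (2 * g + 2) (2 * m) ⬝ᵥ z = 0 := by
  obtain _ | m := m
  · simp [initialVec, dotProduct]
  obtain hm | rfl : m < g ∨ m = g := by omega
  · have hcol := congr_fun hz ⟨2 * m, by omega⟩
    change z ⬝ᵥ (PsiMat g)ᵀ _ = 0 at hcol
    rwa [psiMat_transpose_even hm, dotProduct_comm] at hcol
  · exact (initialVec_self_dotProduct z).trans hsum

lemma initialVec_odd_dotProduct (hz : z ᵥ* PsiMat g = 0) (hsum : ∑ i, z i = 0) {m : ℕ}
    (hm : m ≤ g) : initialVec (2 * g + 2) (2 * m + 1) ⬝ᵥ z = z 0 := by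
  induction m with
  | zero => simp [initialVec, dotProduct]
  | succ m ih =>
    have hcol := congr_fun hz ⟨2 * m + 1, by omega⟩
    change z ⬝ᵥ (PsiMat g)ᵀ _ = 0 at hcol
    have heven : initialVec (2 * g + 2) (2 * m + 2) ⬝ᵥ z = 0 :=
      initialVec_even_dotProduct hz hsum (m := m + 1) (by omega)
    rw [psiMat_transpose_odd (by omega), dotProduct_comm, add_dotProduct, add_dotProduct,
      ih (by omega), heven, add_zero, ← ZModModule.sub_eq_add, sub_eq_zero] at hcol
    exact hcol.symm

lemma apply_eq_apply_zero_of_vecMul_psiMat_eq_zero (hz : z ᵥ* PsiMat g = 0)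
    (hsum : ∑ i, z i = 0) (k : Fin (2 * g + 2)) : z k = z 0 := by
  have hk := initialVec_succ_dotProduct k z
  obtain ⟨k, hk'⟩ := k
  obtain ⟨m, rfl | rfl⟩ := Nat.even_or_odd' k
  · rwa [initialVec_even_dotProduct hz hsum (by omega),
      initialVec_odd_dotProduct hz hsum (by omega), zero_add, eq_comm] at hk
  · have heven : initialVec (2 * g + 2) (2 * m + 2) ⬝ᵥ z = 0 :=
      initialVec_even_dotProduct hz hsum (m := m + 1) (by omega)
    rw [heven, initialVec_odd_dotProduct hz hsum (by omega), eq_comm, ← ZModModule.sub_eq_add,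
      sub_eq_zero] at hk
    exact hk.symm

end Kernel

end PsiMat

section PsiAdjoint

variable {g : ℕ}

variable (g) in
/-- The adjoint of `ψ` with respect to the dot product on `(ℤ/2ℤ)^{2g+2}` and the form `Ω` on
`(ℤ/2ℤ)^{2g}`. -/
def psiAdjoint : (Fin (2 * g + 2) → ZMod 2) →ₗ[ZMod 2] (Fin (2 * g) → ZMod 2) :=
  (OmegaMat g (ZMod 2)).mulVecLin ∘ₗ (PsiMat g).vecMulLinear

lemma psiAdjoint_apply (z : Fin (2 * g + 2) → ZMod 2) :
    psiAdjoint g z = OmegaMat g (ZMod 2) *ᵥ (z ᵥ* PsiMat g) := rfl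

lemma omegaMat_mulVec_omegaMat_mulVec (x : Fin (2 * g) → ZMod 2) :
    OmegaMat g (ZMod 2) *ᵥ OmegaMat g (ZMod 2) *ᵥ x = x := by
  rw [mulVec_mulVec, omegaMat_mul_self, neg_mulVec, one_mulVec, ZModModule.neg_eq_self]

lemma toBilin'_psiAdjoint (z : Fin (2 * g + 2) → ZMod 2) (x : Fin (2 * g) → ZMod 2) :
    toBilin' (OmegaMat g (ZMod 2)) (psiAdjoint g z) x = z ⬝ᵥ PsiMat g *ᵥ x := by
  rw [toBilin'_apply', dotProduct_mulVec, psiAdjoint_apply, ← mulVec_transpose,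
    transpose_eq_neg_of_isAlt (isAlt_toBilin'_omegaMat g _), neg_mulVec, ZModModule.neg_eq_self,
    omegaMat_mulVec_omegaMat_mulVec, dotProduct_mulVec]

lemma psiAdjoint_psiMat_mulVec (x : Fin (2 * g) → ZMod 2) :
    psiAdjoint g (PsiMat g *ᵥ x) = x := by
  rw [psiAdjoint_apply, ← mulVec_transpose, mulVec_mulVec _ (PsiMat g)ᵀ,
    psiMat_transpose_mul_self, omegaMat_mulVec_omegaMat_mulVec]

lemma psiMat_mulVec_psiAdjoint {z : Fin (2 * g + 2) → ZMod 2} (hz : ∑ i, z i = 0) :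
    ∃ c : ZMod 2, PsiMat g *ᵥ psiAdjoint g z = z + c • tvec g := by
  set w := PsiMat g *ᵥ psiAdjoint g z - z
  have hw : w ᵥ* PsiMat g = 0 := by
    rw [sub_vecMul, ← mulVec_transpose, mulVec_mulVec, psiMat_transpose_mul_self, psiAdjoint_apply,
      omegaMat_mulVec_omegaMat_mulVec, sub_self]
  have hsum : ∑ i, w i = 0 := by
    simp only [w, Pi.sub_apply, Finset.sum_sub_distrib, sum_psiMat_mulVec, hz, sub_zero]
  refine ⟨w 0, ?_⟩
  rw [← sub_eq_iff_eq_add']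
  ext k
  simp [tvec, ← apply_eq_apply_zero_of_vecMul_psiMat_eq_zero hw hsum k, w]

lemma toBilin'_psiAdjoint_psiAdjoint {z w : Fin (2 * g + 2) → ZMod 2} (hz : ∑ i, z i = 0)
    (hw : ∑ i, w i = 0) :
    toBilin' (OmegaMat g (ZMod 2)) (psiAdjoint g z) (psiAdjoint g w) = z ⬝ᵥ w := by
  obtain ⟨c, hc⟩ := psiMat_mulVec_psiAdjoint hw
  have ht : z ⬝ᵥ tvec g = 0 := (dotProduct_one z).trans hz
  rw [toBilin'_psiAdjoint, hc, dotProduct_add, dotProduct_smul, ht, smul_zero, add_zero]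

variable (g) in
/-- The vectors `d i` of `(ℤ/2ℤ)^{2g}` with the property that `ψ` identifies each `d i + d j` with
the class of `e i + e j` in `W`. -/
def transpositionVec (i : Fin (2 * g + 2)) : Fin (2 * g) → ZMod 2 :=
  psiAdjoint g (Pi.single i 1)

lemma sum_single_add_single {ι : Type*} [Fintype ι] [DecidableEq ι] (i j : ι) :
    ∑ k, (Pi.single i 1 + Pi.single j 1 : ι → ZMod 2) k = 0 := by
  simp [Finset.sum_add_distrib, ZModModule.add_self]

lemma transpositionVec_add_transpositionVec (i j : Fin (2 * g + 2)) :
    transpositionVec g i + transpositionVec g j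
      = psiAdjoint g (Pi.single i 1 + Pi.single j 1) :=
  (map_add _ _ _).symm

lemma psiAdjoint_eq_sum (z : Fin (2 * g + 2) → ZMod 2) :
    psiAdjoint g z = ∑ k, z k • transpositionVec g k := by
  conv_lhs => rw [pi_eq_sum_univ' z]
  simp [transpositionVec]

lemma span_transpositionVec_add_transpositionVec :
    Submodule.span (ZMod 2) (Set.range fun x : Fin (2 * g + 2) × Fin (2 * g + 2) ↦
      transpositionVec g x.1 + transpositionVec g x.2) = ⊤ := by
  refine eq_top_iff.2 fun x _ ↦ ?_
  have hx : x = ∑ k, (PsiMat g *ᵥ x) k • (transpositionVec g 0 + transpositionVec g k) := by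
    simp only [smul_add, Finset.sum_add_distrib, ← Finset.sum_smul, sum_psiMat_mulVec, zero_smul,
      zero_add, ← psiAdjoint_eq_sum, psiAdjoint_psiMat_mulVec]
  rw [hx]
  exact Submodule.sum_mem _ fun k _ ↦ Submodule.smul_mem _ _ (Submodule.subset_span ⟨(0, k), rfl⟩)

theorem isTranspositionFamily_transpositionVec :
    IsTranspositionFamily (toBilin' (OmegaMat g (ZMod 2))) (transpositionVec g) where
  even_card := by simp [Nat.even_add]
  sum_eq_zero := by
    have h := psiAdjoint_eq_sum (g := g) 1
    rw [psiAdjoint_apply, one_vecMul_psiMat, mulVec_zero] at h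
    simpa using h.symm
  form_eq_dotProduct i j k l := by
    rw [transpositionVec_add_transpositionVec, transpositionVec_add_transpositionVec,
      toBilin'_psiAdjoint_psiAdjoint (sum_single_add_single i j) (sum_single_add_single k l)]
  span_eq_top := span_transpositionVec_add_transpositionVec

end PsiAdjoint

section RepresentsPerm

variable {g : ℕ}

lemma representsPerm_of_forall_mulVec {A : Matrix (Fin (2 * g)) (Fin (2 * g)) (ZMod 2)}
    {σ : Equiv.Perm (Fin (2 * g + 2))}
    (h : ∀ x, PsiMat g *ᵥ A *ᵥ x - permMat g σ *ᵥ PsiMat g *ᵥ x ∈ tline g) :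
    representsPerm g A σ := by
  intro j
  convert h (Pi.single j 1) using 1
  rw [mulVec_mulVec, mulVec_mulVec, ← sub_mulVec, mulVec_single_one]
  rfl

lemma permMat_mulVec (σ : Equiv.Perm (Fin (2 * g + 2))) (z : Fin (2 * g + 2) → ZMod 2) :
    permMat g σ *ᵥ z = z ∘ σ.symm := by
  ext k
  simp [permMat, mulVec, dotProduct, ← Equiv.eq_symm_apply]

lemma permMat_swap_mulVec (i j : Fin (2 * g + 2)) (z : Fin (2 * g + 2) → ZMod 2) :
    permMat g (Equiv.swap i j) *ᵥ z = z + (z i + z j) • (Pi.single i 1 + Pi.single j 1) := by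
  rw [permMat_mulVec]
  ext k
  obtain rfl | hik := eq_or_ne k i
  · obtain rfl | hkj := eq_or_ne k j
    · simp [ZModModule.add_self]
    · simp [hkj, ← add_assoc, ZModModule.add_self]
  · obtain rfl | hkj := eq_or_ne k j
    · simp [hik, add_left_comm (z k), ZModModule.add_self]
    · simp [hik, hkj, Equiv.swap_apply_of_ne_of_ne hik hkj]

lemma representsPerm_symplecticTransvection (i j : Fin (2 * g + 2)) :
    representsPerm g (symplecticTransvection (isAlt_toBilin'_omegaMat g (ZMod 2))
      (transpositionVec g i + transpositionVec g j)).val (Equiv.swap i j) := by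
  refine representsPerm_of_forall_mulVec fun x ↦ ?_
  obtain ⟨c, hc⟩ := psiMat_mulVec_psiAdjoint (sum_single_add_single i j)
  rw [symplecticTransvection_mulVec, transpositionVec_add_transpositionVec,
    LinearMap.transvection.apply, toBilin'_psiAdjoint, mulVec_add, mulVec_smul, hc,
    permMat_swap_mulVec, add_dotProduct, single_one_dotProduct, single_one_dotProduct,
    add_sub_add_left_eq_sub, smul_add, add_sub_cancel_left]
  exact Submodule.smul_mem _ _ (Submodule.smul_mem _ _ (Submodule.mem_span_singleton_self _))

end RepresentsPerm

theorem maximal_monodromy_stmt13_general (g : ℕ) (hg : 2 ≤ g)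
    (H : Subgroup (GL (Fin (2 * g)) ℤ_[2]))
    (hclosed : IsClosed (H : Set (GL (Fin (2 * g)) ℤ_[2])))
    (hsub : (H : Set (GL (Fin (2 * g)) ℤ_[2])) ⊆
      {x | x ∈ SpSet g ℤ_[2] ∧ ∃ σ : Equiv.Perm (Fin (2 * g + 2)),
        representsPerm g ((redMod2 g x : GL (Fin (2 * g)) (ZMod 2))
          : Matrix (Fin (2 * g)) (Fin (2 * g)) (ZMod 2)) σ})
    (himg : ∀ B : GL (Fin (2 * g)) (ZMod 2),
      (∃ σ : Equiv.Perm (Fin (2 * g + 2)),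
        representsPerm g (B : Matrix (Fin (2 * g)) (Fin (2 * g)) (ZMod 2)) σ)
      ↔ B ∈ Subgroup.map (redMod2 g) H) :
    (H : Set (GL (Fin (2 * g)) ℤ_[2]))
      = {x | x ∈ SpSet g ℤ_[2] ∧ ∃ σ : Equiv.Perm (Fin (2 * g + 2)),
          representsPerm g ((redMod2 g x : GL (Fin (2 * g)) (ZMod 2))
            : Matrix (Fin (2 * g)) (Fin (2 * g)) (ZMod 2)) σ} := by
  have hHO : H ≤ formStabilizer (OmegaMat g ℤ_[2]) := fun x hx ↦ (hsub hx).1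
  have hd : IsTranspositionFamily
      (toBilin' ((OmegaMat g ℤ_[2]).map PadicInt.toZMod)) (transpositionVec g) := by
    rw [map_omegaMat]
    exact isTranspositionFamily_transpositionVec
  refine hsub.antisymm fun x ⟨hxO, hx⟩ ↦
    hd.mem_of_isClosed_of_map_mem (isAlt_toBilin'_omegaMat g _) ?_ ?_
      hclosed hHO (fun i j ↦ ?_) hxO ((himg _).1 hx)
  · rw [Fintype.card_fin]
    omega
  · rw [map_omegaMat]
    exact isUnit_omegaMat g _
  · refine (himg _).1 ⟨Equiv.swap i j, ?_⟩
    rw [coe_symplecticTransvection, map_omegaMat, ← coe_symplecticTransvection]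
    exact representsPerm_symplecticTransvection i j

/-- Let `g ∈ {2,3}` and let `S̃_{2g+2} ⊆ Sp_{2g}(ℤ_2)` be the full preimage of the embedded
copy of `S_{2g+2} ⊆ Sp_{2g}(ℤ/2ℤ)` under mod-2 reduction. If `H ⊆ S̃_{2g+2}` is a closed
subgroup whose mod-2 image equals the full embedded `S_{2g+2}`, then `H = S̃_{2g+2}`. -/
theorem maximal_monodromy_stmt13 (g : ℕ) (hg : g = 2 ∨ g = 3)
    (H : Subgroup (GL (Fin (2*g)) ℤ_[2]))
    (hclosed : IsClosed (H : Set (GL (Fin (2*g)) ℤ_[2])))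
    (hsub : (H : Set (GL (Fin (2*g)) ℤ_[2])) ⊆
      {x | x ∈ SpSet g ℤ_[2] ∧ ∃ σ : Equiv.Perm (Fin (2*g+2)),
        representsPerm g ((redMod2 g x : GL (Fin (2*g)) (ZMod 2))
          : Matrix (Fin (2*g)) (Fin (2*g)) (ZMod 2)) σ})
    (himg : ∀ B : GL (Fin (2*g)) (ZMod 2),
      (∃ σ : Equiv.Perm (Fin (2*g+2)),
        representsPerm g (B : Matrix (Fin (2*g)) (Fin (2*g)) (ZMod 2)) σ)
      ↔ B ∈ Subgroup.map (redMod2 g) H) :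
    (H : Set (GL (Fin (2*g)) ℤ_[2]))
      = {x | x ∈ SpSet g ℤ_[2] ∧ ∃ σ : Equiv.Perm (Fin (2*g+2)),
          representsPerm g ((redMod2 g x : GL (Fin (2*g)) (ZMod 2))
            : Matrix (Fin (2*g)) (Fin (2*g)) (ZMod 2)) σ} :=
  maximal_monodromy_stmt13_general g (by omega) H hclosed hsub himg
end
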